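/- arXiv:1705.07604 — 2 statements merged into one kernel-verified Lean document; each statement's English description precedes it below -/
import Mathlib

section
/- The quantity (f^λ · f^{n^m/λ}) / (s_λ(1^m) · s_{λ'}(1^n)) does not depend on the choice of the partition λ ⊆ n^m with |λ| = p; it equals f^{n^m} / C(mn, p). -/
open YoungDiagram Finset

/-- The rectangular Young diagram with `m` rows and `n` columns. -/
def rect (m n : ℕ) : YoungDiagram where
  cells := Finset.range m ×ˢ Finset.range n
  isLowerSet := by
    rintro ⟨a1, a2⟩ ⟨b1, b2⟩ ⟨h1, h2⟩ hb
    simp only [Finset.coe_product, Set.mem_prod, Finset.mem_coe, Finset.mem_range] at *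
    exact ⟨lt_of_le_of_lt h1 hb.1, lt_of_le_of_lt h2 hb.2⟩

/-- The 180°-rotated complement of a Young diagram `μ` inside the rectangle with
`m` rows and `n` columns: its row lengths are `n - μ.rowLen (m-1-i)`. -/
def complement (m n : ℕ) (μ : YoungDiagram) : YoungDiagram where
  cells := (Finset.range m ×ˢ Finset.range n).filter fun p => p.2 < n - μ.rowLen (m - 1 - p.1)
  isLowerSet := by
    rintro ⟨a1, a2⟩ ⟨b1, b2⟩ ⟨h1, h2⟩ hb
    simp only [Finset.coe_filter, Set.mem_setOf_eq, Finset.mem_product, Finset.mem_range] at *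
    refine ⟨⟨lt_of_le_of_lt h1 hb.1.1, lt_of_le_of_lt h2 hb.1.2⟩, ?_⟩
    calc b2 ≤ a2 := h2
      _ < n - μ.rowLen (m - 1 - a1) := hb.2
      _ ≤ n - μ.rowLen (m - 1 - b1) :=
          Nat.sub_le_sub_left (μ.rowLen_anti _ _ (Nat.sub_le_sub_left h1 _)) n

/-- The hook length of the cell `c` in the Young diagram `μ` (arm + leg + 1). -/
def hookLength (μ : YoungDiagram) (c : ℕ × ℕ) : ℕ :=
  (μ.rowLen c.1 - c.2) + (μ.colLen c.2 - c.1) - 1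

/-- The product of all hook lengths of `μ`. -/
def hookProd (μ : YoungDiagram) : ℕ := ∏ c ∈ μ.cells, hookLength μ c

/-- The number of semistandard Young tableaux of shape `μ` with entries in `{0, …, k-1}`;
this equals `s_μ(1^k) = dim S^μ(ℂ^k)`. -/
noncomputable def ssytCount (μ : YoungDiagram) (k : ℕ) : ℕ :=
  Set.ncard {T : SemistandardYoungTableau μ | ∀ i j, (i, j) ∈ μ → T i j < k}

/-- `T : ℕ × ℕ → ℕ` is a standard Young tableau of shape `μ` (with entries `0, …, |μ|-1`):
it is a bijection from the cells of `μ` to `{0, …, |μ|-1}`, strictly increasing along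
rows and columns, and zero outside `μ`. -/
def IsSyt (μ : YoungDiagram) (T : ℕ × ℕ → ℕ) : Prop :=
  Set.BijOn T (μ.cells : Set (ℕ × ℕ)) (Finset.range μ.card : Set ℕ) ∧
  (∀ i j, (i, j + 1) ∈ μ → T (i, j) < T (i, j + 1)) ∧
  (∀ i j, (i + 1, j) ∈ μ → T (i, j) < T (i + 1, j)) ∧
  (∀ c, c ∉ μ → T c = 0)

/-- The number of standard Young tableaux of shape `μ`, i.e. `f^μ`. -/
noncomputable def sytCount (μ : YoungDiagram) : ℕ := Set.ncard {T | IsSyt μ T}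

/-- Vandermonde determinant over `ℚ` of a natural-number sequence. -/
noncomputable def VD {m : ℕ} (x : Fin m → ℚ) : ℚ := (Matrix.vandermonde x).det

lemma VD_desc {m : ℕ} (x : Fin m → ℚ) :
    VD x = (Matrix.of (fun i j : Fin m => (descPochhammer ℚ j).eval (x i))).det :=
  Matrix.det_eval_matrixOfPolynomials_eq_det_vandermonde x (fun j => descPochhammer ℚ j)
    (fun i => descPochhammer_natDegree ℚ i) (fun i => monic_descPochhammer ℚ i)

lemma desc_shift (j : ℕ) (t : ℚ) :
    t * (descPochhammer ℚ j).eval (t - 1) = (t - j) * (descPochhammer ℚ j).eval t := by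
  have h1 : (descPochhammer ℚ (j + 1)).eval t = t * (descPochhammer ℚ j).eval (t - 1) := by
    rw [descPochhammer_succ_left]; simp
  rw [← h1, descPochhammer_succ_eval]; ring

lemma VD_sum {m : ℕ} (x : Fin m → ℚ) :
    ∑ i, x i * VD (Function.update x i (x i - 1)) = (∑ i, x i - ∑ i : Fin m, (i : ℚ)) * VD x := by
  have key : ∀ i, x i * VD (Function.update x i (x i - 1)) =
      ∑ σ : Equiv.Perm (Fin m), ((Equiv.Perm.sign σ : ℤ) : ℚ) * ((x i - ((σ⁻¹ i : Fin m) : ℕ)) *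
        ∏ k : Fin m, (descPochhammer ℚ k).eval (x (σ k))) := by
    intro i
    rw [VD_desc, Matrix.det_apply', Finset.mul_sum]
    refine Finset.sum_congr rfl fun σ _ => ?_
    rw [mul_left_comm]
    congr 1
    simp only [Matrix.of_apply]
    rw [← Finset.mul_prod_erase _ _ (Finset.mem_univ (σ⁻¹ i)),
      ← Finset.mul_prod_erase (a := σ⁻¹ i) _ _ (Finset.mem_univ (σ⁻¹ i)), ← mul_assoc, ← mul_assoc]
    congr 1
    · have e : σ (σ⁻¹ i) = i := by simp
      simp only [e, Function.update_self]
      exact desc_shift _ _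
    · refine Finset.prod_congr rfl fun k hk => ?_
      have : σ k ≠ i := by
        rintro rfl
        simp at hk
      rw [Function.update_of_ne this]
  simp_rw [key]
  rw [Finset.sum_comm, VD_desc, Matrix.det_apply', Finset.mul_sum]
  refine Finset.sum_congr rfl fun σ _ => ?_
  rw [← Finset.mul_sum, ← Finset.sum_mul, mul_left_comm, Finset.sum_sub_distrib]
  have := Equiv.sum_comp σ⁻¹ (fun k : Fin m => ((k : ℕ) : ℚ))
  rw [this]
  rfl

lemma VD_id (m : ℕ) : VD (fun i : Fin m => (i : ℚ)) = ∏ i : Fin m, ((i : ℕ).factorial : ℚ) := by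
  rw [VD_desc]
  rw [Matrix.det_of_isLowerTriangular]
  · refine Finset.prod_congr rfl fun i _ => ?_
    simp only [Matrix.of_apply]
    rw [descPochhammer_eval_eq_descFactorial, Nat.descFactorial_self]
  · intro i j hij
    simp only [Matrix.of_apply]
    exact descPochhammer_eval_coe_nat_of_lt (by exact_mod_cast hij)

/-- determinant of binomials -/
noncomputable def CD {m : ℕ} (x : Fin m → ℕ) : ℚ :=
  (Matrix.of (fun i j : Fin m => ((x i).choose j : ℚ))).det

lemma VD_CD {m : ℕ} (x : Fin m → ℕ) :
    VD (fun i => (x i : ℚ)) = (∏ i : Fin m, ((i : ℕ).factorial : ℚ)) * CD x := by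
  rw [VD_desc, CD, ← Matrix.det_mul_row]
  congr 1
  ext i j
  simp only [Matrix.of_apply]
  rw [descPochhammer_eval_eq_descFactorial, Nat.descFactorial_eq_factorial_mul_choose]
  push_cast; ring

lemma sum_Ico_choose' (a b j : ℕ) (h : a ≤ b) :
    ∑ y ∈ Finset.Ico a b, (y.choose j : ℚ) = (b.choose (j+1) : ℚ) - a.choose (j+1) := by
  induction b, h using Nat.le_induction with
  | base => simp
  | succ b hb ih =>
    rw [Finset.sum_Ico_succ_top hb, ih, Nat.choose_succ_succ]; push_cast; ring

lemma CD_sum {k : ℕ} (x : Fin (k+1) → ℕ) (hx : Monotone x) :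
    ∑ y ∈ Fintype.piFinset (fun i : Fin k => Finset.Ico (x i.castSucc) (x i.succ)), CD y = CD x := by
  have h1 := (Matrix.detRowAlternating (R := ℚ) (n := Fin k)).toMultilinearMap.map_sum_finset
    (fun (_ : Fin k) (y : ℕ) => (fun j : Fin k => (y.choose j : ℚ)))
    (fun i : Fin k => Finset.Ico (x i.castSucc) (x i.succ))
  have h2 : ∑ y ∈ Fintype.piFinset (fun i : Fin k => Finset.Ico (x i.castSucc) (x i.succ)), CD y
    = (Matrix.of (fun i j : Fin k => ((x i.succ).choose (j+1) : ℚ) - (x i.castSucc).choose (j+1))).det := by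
    refine Eq.trans h1.symm ?_
    change Matrix.det _ = _
    congr 1
    ext i j
    rw [Finset.sum_apply]
    exact sum_Ico_choose' _ _ _ (hx (Fin.castSucc_lt_succ).le)
  rw [h2, CD]
  rw [Matrix.det_eq_of_forall_row_eq_smul_add_pred (B := Matrix.of (Fin.cons (fun j : Fin (k+1) => ((x 0).choose j : ℚ)) (fun i j => ((x i.succ).choose j : ℚ) - (x i.castSucc).choose j))) (fun _ => 1)]
  · rw [Matrix.det_succ_column_zero, Fin.sum_univ_succ]
    simp
    rfl
  · intro j; simp
  · intro i j; simp

lemma VD_rev {m : ℕ} (x : Fin m → ℚ) (c : ℚ) : VD (fun i => c - x i.rev) = VD x := by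
  unfold VD
  rw [Matrix.det_vandermonde, Matrix.det_vandermonde, Finset.prod_sigma', Finset.prod_sigma']
  refine Finset.prod_bij' (fun p _ => ⟨p.2.rev, p.1.rev⟩) (fun p _ => ⟨p.2.rev, p.1.rev⟩) ?_ ?_ ?_ ?_ ?_ <;> simp
lemma ncard_fiber {α β : Type*} (S : Set α) (hS : S.Finite) (t : Finset β) (R : α → β → Prop)
    (h : ∀ a ∈ S, ∃! b, b ∈ t ∧ R a b) :
    S.ncard = ∑ b ∈ t, {a | a ∈ S ∧ R a b}.ncard := by
  classical
  have hc : ∀ b, {a | a ∈ S ∧ R a b}.ncard = (hS.toFinset.filter (fun a => R a b)).card := by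
    intro b
    rw [← Set.ncard_coe_finset]
    congr 1
    ext a; simp
  simp_rw [hc]
  rw [Set.ncard_eq_toFinset_card S hS, Finset.card_eq_sum_ones]
  simp_rw [Finset.card_filter]
  rw [Finset.sum_comm]
  refine Finset.sum_congr rfl fun a ha => ?_
  obtain ⟨b, ⟨hb, hR⟩, hu⟩ := h a (by simpa using ha)
  rw [Finset.sum_eq_single b]
  · simp [hR]
  · intro c hc hne
    rw [if_neg]
    intro hR'
    exact hne (hu c ⟨hc, hR'⟩)
  · intro h; exact absurd hb h

/-- Shifted row lengths, in increasing order. -/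
def XX (m : ℕ) (μ : YoungDiagram) (i : Fin m) : ℕ := μ.rowLen (m - 1 - i) + i

lemma XX_strictMono (m : ℕ) (μ : YoungDiagram) : StrictMono (XX m μ) := by
  intro i j hij
  have h1 : (i : ℕ) < j := hij
  have := μ.rowLen_anti (m - 1 - j) (m - 1 - i) (by omega)
  unfold XX; omega

lemma sum_XX (m : ℕ) (μ : YoungDiagram) (hm : μ.rowLen m = 0) :
    ∑ i, XX m μ i = μ.card + ∑ i : Fin m, (i : ℕ) := by
  unfold XX
  rw [Finset.sum_add_distrib]
  congr 1
  rw [Fin.sum_univ_eq_sum_range (fun i => μ.rowLen (m - 1 - i)) m, Finset.sum_range_reflect]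
  unfold YoungDiagram.card
  rw [Finset.card_eq_sum_card_fiberwise (f := Prod.fst) (t := Finset.range m)]
  · refine Finset.sum_congr rfl fun i _ => ?_
    rw [μ.rowLen_eq_card]; rfl
  · rintro ⟨i, j⟩ hc
    have hc : (i, j) ∈ μ := hc
    rw [mem_iff_lt_rowLen] at hc
    simp only [Finset.coe_range, Set.mem_Iio]
    by_contra hi
    have := μ.rowLen_anti m i (by omega)
    omega

/-- Remove all cells weakly south-east of `c`. -/
def rm (μ : YoungDiagram) (c : ℕ × ℕ) : YoungDiagram where
  cells := μ.cells.filter fun d => ¬ c ≤ d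
  isLowerSet := by
    intro a b hba ha
    simp only [Finset.coe_filter, Set.mem_ofPred_eq] at *
    exact ⟨μ.isLowerSet hba ha.1, fun h => ha.2 (h.trans hba)⟩

lemma mem_rm (μ : YoungDiagram) (c d : ℕ × ℕ) : d ∈ rm μ c ↔ d ∈ μ ∧ ¬ c ≤ d := by
  rw [← mem_cells]; simp [rm]

/-- Row `r` ends in a removable corner. -/
def Cor (μ : YoungDiagram) (r : ℕ) : Prop := μ.rowLen (r + 1) < μ.rowLen r

lemma mem_rm_cor (μ : YoungDiagram) (r : ℕ) (h : Cor μ r) (d : ℕ × ℕ) :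
    d ∈ rm μ (r, μ.rowLen r - 1) ↔ d ∈ μ ∧ d ≠ (r, μ.rowLen r - 1) := by
  obtain ⟨i, j⟩ := d
  rw [mem_rm, mem_iff_lt_rowLen]
  unfold Cor at h
  refine and_congr_right fun hd => not_congr ?_
  rw [Prod.mk_le_mk, Prod.mk.injEq]
  constructor
  · rintro ⟨h1, h2⟩
    have : i = r := by
      by_contra hne
      have := μ.rowLen_anti (r+1) i (by omega)
      omega
    subst this
    omega
  · rintro ⟨h1, h2⟩
    omega

lemma rm_cells (μ : YoungDiagram) (r : ℕ) (h : Cor μ r) :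
    (rm μ (r, μ.rowLen r - 1)).cells = μ.cells.erase (r, μ.rowLen r - 1) := by
  ext d
  rw [mem_cells, mem_rm_cor μ r h, Finset.mem_erase, mem_cells, and_comm]

lemma cor_mem (μ : YoungDiagram) (r : ℕ) (h : Cor μ r) : (r, μ.rowLen r - 1) ∈ μ := by
  rw [mem_iff_lt_rowLen]; unfold Cor at h; omega

lemma rm_card (μ : YoungDiagram) (r : ℕ) (h : Cor μ r) :
    (rm μ (r, μ.rowLen r - 1)).card + 1 = μ.card := by
  unfold YoungDiagram.card
  rw [rm_cells μ r h]
  exact Finset.card_erase_add_one (by rw [mem_cells]; exact cor_mem μ r h)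

lemma rowLen_eq_of (μ : YoungDiagram) (r n : ℕ) (h : ∀ j, (r, j) ∈ μ ↔ j < n) : μ.rowLen r = n := by
  have h1 := h n
  have h2 := h (μ.rowLen r)
  rw [mem_iff_lt_rowLen] at h1 h2
  omega

lemma rm_rowLen (μ : YoungDiagram) (r : ℕ) (h : Cor μ r) (i : ℕ) :
    (rm μ (r, μ.rowLen r - 1)).rowLen i = if i = r then μ.rowLen r - 1 else μ.rowLen i := by
  apply rowLen_eq_of
  intro j
  rw [mem_rm_cor μ r h, mem_iff_lt_rowLen]
  split_ifs with hi
  · subst hi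
    simp; omega
  · simp [hi]

lemma syt_finite (μ : YoungDiagram) : {T | IsSyt μ T}.Finite := by
  have : Function.Injective (fun (T : {T | IsSyt μ T}) (c : μ.cells) =>
      (⟨T.1 c, Finset.mem_range.1 (Finset.mem_coe.1 (T.2.1.mapsTo c.2))⟩ : Fin μ.card)) := by
    intro T T' h
    apply Subtype.ext
    funext c
    by_cases hc : c ∈ μ
    · have := congrFun h ⟨c, by rwa [mem_cells]⟩
      simpa using this
    · rw [T.2.2.2.2 c hc, T'.2.2.2.2 c hc]
  exact Set.finite_coe_iff.1 (Finite.of_injective _ this)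

lemma syt_fwd (μ : YoungDiagram) (r : ℕ) (h : Cor μ r) (N : ℕ) (hN : μ.card = N + 1)
    (T : ℕ × ℕ → ℕ) (hT : IsSyt (rm μ (r, μ.rowLen r - 1)) T) :
    IsSyt μ (Function.update T (r, μ.rowLen r - 1) N) := by
  set c := (r, μ.rowLen r - 1) with hc
  have hcμ : c ∈ μ := cor_mem μ r h
  have hcard : (rm μ c).card = N := by have := rm_card μ r h; rw [← hc] at this; omega
  obtain ⟨hb, hr, hcl, hz⟩ := hT
  have hlt : ∀ d ∈ rm μ c, T d < N := by
    intro d hd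
    have := hb.mapsTo (show d ∈ ((rm μ c).cells : Set _) from hd)
    simpa [hcard] using this
  have hmem : ∀ d, d ∈ rm μ c ↔ d ∈ μ ∧ d ≠ c := mem_rm_cor μ r h
  have hprev : ∀ d e, e ∈ μ → d ≤ e → d ≠ e → d ∈ rm μ c := by
    intro d e he hde hne
    rw [hmem]
    refine ⟨μ.isLowerSet hde he, ?_⟩
    rintro rfl
    have := (hmem e).2 ⟨he, fun h => hne h.symm⟩
    rw [mem_rm] at this
    exact this.2 hde
  have step : ∀ d e, e ∈ μ → d ≤ e → d ≠ e → (e ∈ rm μ c → T d < T e) →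
      Function.update T c N d < Function.update T c N e := by
    intro d e he hde hne hlt'
    have hd := hprev d e he hde hne
    rw [Function.update_of_ne ((hmem d).1 hd).2]
    by_cases hec : e = c
    · subst hec; rw [Function.update_self]; exact hlt d hd
    · rw [Function.update_of_ne hec]; exact hlt' ((hmem e).2 ⟨he, hec⟩)
  refine ⟨?_, ?_, ?_, ?_⟩
  · have hset : (μ.cells : Set (ℕ × ℕ)) = insert c ((rm μ c).cells : Set (ℕ × ℕ)) := by
      rw [rm_cells μ r h, ← hc, ← Finset.coe_insert, Finset.insert_erase]
      rwa [mem_cells]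
    have hrange : (Finset.range μ.card : Set ℕ) = insert N (Finset.range (rm μ c).card : Set ℕ) := by
      rw [hN, hcard, Finset.range_add_one, Finset.coe_insert]
    rw [hset, hrange]
    have hb' : Set.BijOn (Function.update T c N) ((rm μ c).cells : Set (ℕ × ℕ))
        (Finset.range (rm μ c).card : Set ℕ) := by
      refine hb.congr ?_
      intro d hd
      rw [Function.update_of_ne ((hmem d).1 hd).2]
    have := hb'.insert (a := c) (by rw [Function.update_self, hcard]; simp)
    rwa [Function.update_self] at this
  · intro i j hm
    exact step _ _ hm (by simp) (by simp) (hr i j)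
  · intro i j hm
    exact step _ _ hm (by simp) (by simp) (hcl i j)
  · intro d hd
    rw [Function.update_of_ne (by rintro rfl; exact hd hcμ)]
    exact hz d (fun h => hd ((hmem d).1 h).1)

lemma syt_bwd (μ : YoungDiagram) (r : ℕ) (h : Cor μ r) (N : ℕ) (hN : μ.card = N + 1)
    (T : ℕ × ℕ → ℕ) (hT : IsSyt μ T) (hTc : T (r, μ.rowLen r - 1) = N) :
    IsSyt (rm μ (r, μ.rowLen r - 1)) (Function.update T (r, μ.rowLen r - 1) 0) := by
  set c := (r, μ.rowLen r - 1) with hc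
  have hcμ : c ∈ μ := cor_mem μ r h
  have hcard : (rm μ c).card = N := by have := rm_card μ r h; rw [← hc] at this; omega
  obtain ⟨hb, hr, hcl, hz⟩ := hT
  have hmem : ∀ d, d ∈ rm μ c ↔ d ∈ μ ∧ d ≠ c := mem_rm_cor μ r h
  have step : ∀ d e, e ∈ rm μ c → d ≤ e → T d < T e →
      Function.update T c 0 d < Function.update T c 0 e := by
    intro d e he hde hlt
    have hd : d ∈ rm μ c := (rm μ c).isLowerSet hde he
    rw [Function.update_of_ne ((hmem d).1 hd).2, Function.update_of_ne ((hmem e).1 he).2]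
    exact hlt
  refine ⟨?_, ?_, ?_, ?_⟩
  · have h1 : Set.BijOn T ((μ.cells : Set (ℕ × ℕ)) \ {c}) ((Finset.range μ.card : Set ℕ) \ {N}) := by
      have := hb.sdiff_singleton (a := c) (by simpa using hcμ)
      rwa [hTc] at this
    have h2 : ((rm μ c).cells : Set (ℕ × ℕ)) = (μ.cells : Set (ℕ × ℕ)) \ {c} := by
      rw [rm_cells μ r h, ← hc, Finset.coe_erase]
    have h3 : (Finset.range (rm μ c).card : Set ℕ) = (Finset.range μ.card : Set ℕ) \ {N} := by
      rw [hcard, hN]; ext k; simp; omega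
    rw [← h2, ← h3] at h1
    refine h1.congr ?_
    intro d hd
    rw [Function.update_of_ne ((hmem d).1 hd).2]
  · intro i j hm
    exact step _ _ hm (by simp) (hr i j ((hmem _).1 hm).1)
  · intro i j hm
    exact step _ _ hm (by simp) (hcl i j ((hmem _).1 hm).1)
  · intro d hd
    by_cases hdc : d = c
    · subst hdc; rw [Function.update_self]
    · rw [Function.update_of_ne hdc]
      exact hz d (fun h' => hd ((hmem d).2 ⟨h', hdc⟩))

lemma syt_fiber (μ : YoungDiagram) (r : ℕ) (h : Cor μ r) (N : ℕ) (hN : μ.card = N + 1) :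
    {T | T ∈ {T | IsSyt μ T} ∧ (Cor μ r ∧ T (r, μ.rowLen r - 1) = N)}.ncard =
      sytCount (rm μ (r, μ.rowLen r - 1)) := by
  have hc : ∀ T, IsSyt (rm μ (r, μ.rowLen r - 1)) T → T (r, μ.rowLen r - 1) = 0 := by
    intro T hT
    apply hT.2.2.2
    rw [mem_rm]; simp
  unfold sytCount
  have : {T | T ∈ {T | IsSyt μ T} ∧ (Cor μ r ∧ T (r, μ.rowLen r - 1) = N)} =
      (fun T => Function.update T (r, μ.rowLen r - 1) N) ''
        {T | IsSyt (rm μ (r, μ.rowLen r - 1)) T} := by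
    ext T
    constructor
    · rintro ⟨hT, -, hTc⟩
      refine ⟨_, syt_bwd μ r h N hN T hT hTc, ?_⟩
      simp [← hTc]
    · rintro ⟨T', hT', rfl⟩
      exact ⟨syt_fwd μ r h N hN T' hT', h, by simp⟩
  rw [this]
  apply Set.InjOn.ncard_image
  intro T hT T' hT' he
  funext d
  by_cases hd : d = (r, μ.rowLen r - 1)
  · rw [hd, hc T hT, hc T' hT']
  · have := congrFun he d
    simpa [Function.update_of_ne hd] using this

lemma lt_of_mem_rows (μ : YoungDiagram) (m : ℕ) (hm : μ.rowLen m = 0) (i j : ℕ)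
    (h : (i, j) ∈ μ) : i < m := by
  rw [mem_iff_lt_rowLen] at h
  by_contra hi
  have := μ.rowLen_anti m i (by omega)
  omega

open Classical in
lemma syt_rec (m : ℕ) (μ : YoungDiagram) (hm : μ.rowLen m = 0) (N : ℕ) (hN : μ.card = N + 1) :
    sytCount μ = ∑ i : Fin m, if Cor μ (m - 1 - i) then
      sytCount (rm μ (m - 1 - i, μ.rowLen (m - 1 - i) - 1)) else 0 := by
  have := ncard_fiber {T | IsSyt μ T} (syt_finite μ) (Finset.univ : Finset (Fin m))
    (fun T i => Cor μ (m - 1 - i) ∧ T (m - 1 - i, μ.rowLen (m - 1 - i) - 1) = N) ?_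
  · unfold sytCount at *
    rw [this]
    refine Finset.sum_congr rfl fun i _ => ?_
    split_ifs with hcor
    · exact syt_fiber μ _ hcor N hN
    · rw [Set.ncard_eq_zero ((syt_finite μ).subset (fun T h => h.1))]
      ext T
      simp [hcor]
  · intro T hT
    have hT : IsSyt μ T := hT
    obtain ⟨hb, hr, hcl, hz⟩ := hT
    obtain ⟨⟨a, b⟩, hab, hTab⟩ := hb.surjOn (show N ∈ (Finset.range μ.card : Set ℕ) by simp [hN])
    have hab : (a, b) ∈ μ := hab
    have hle : ∀ d ∈ μ, T d ≤ N := by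
      intro d hd
      have := hb.mapsTo (show d ∈ (μ.cells : Set _) from hd)
      simp [hN] at this; omega
    have ham := lt_of_mem_rows μ m hm a b hab
    have h1 : (a, b + 1) ∉ μ := by
      intro h'; have := hr a b h'; have := hle _ h'; omega
    have h2 : (a + 1, b) ∉ μ := by
      intro h'; have := hcl a b h'; have := hle _ h'; omega
    rw [mem_iff_lt_rowLen] at h1 h2
    have hab' := hab
    rw [mem_iff_lt_rowLen] at hab'
    have hrow : μ.rowLen a = b + 1 := by omega
    have ha : m - 1 - (m - 1 - a) = a := by omega
    refine ⟨⟨m - 1 - a, by omega⟩, ⟨Finset.mem_univ _, ?_⟩, ?_⟩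
    · simp only [ha, hrow]
      refine ⟨?_, by simpa using hTab⟩
      unfold Cor; omega
    · rintro i ⟨-, hcor, hTi⟩
      have := hb.injOn (show (m - 1 - (i : ℕ), μ.rowLen (m - 1 - i) - 1) ∈ (μ.cells : Set _) from cor_mem μ _ hcor)
        (show (a, b) ∈ (μ.cells : Set _) from hab) (hTi.trans hTab.symm)
      have := congrArg Prod.fst this
      simp only at this
      apply Fin.ext
      simp only
      omega

lemma syt_formula (m : ℕ) (N : ℕ) : ∀ (μ : YoungDiagram), μ.rowLen m = 0 → μ.card = N →
    (sytCount μ : ℚ) * ∏ i, ((XX m μ i).factorial : ℚ) = N.factorial * VD (fun i => (XX m μ i : ℚ)) := by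
  classical
  induction N with
  | zero =>
    intro μ hm hN
    have hbot : μ.cells = ∅ := Finset.card_eq_zero.1 hN
    have hbot' : ∀ c, c ∉ μ := by intro c; rw [← mem_cells, hbot]; simp
    have hX : ∀ i, XX m μ i = i := by
      intro i
      unfold XX
      rw [rowLen_eq_of μ _ 0 (by intro j; simp [hbot'])]
      simp
    simp only [hX]
    rw [VD_id]
    have : {T | IsSyt μ T} = {fun _ => 0} := by
      ext T
      constructor
      · intro hT
        funext c
        exact hT.2.2.2 c (hbot' c)
      · rintro rfl
        refine ⟨?_, ?_, ?_, ?_⟩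
        · rw [hbot, hN]; simp
        · intro i j h; exact absurd h (hbot' _)
        · intro i j h; exact absurd h (hbot' _)
        · simp
    unfold sytCount
    rw [this]; simp
  | succ N ih =>
    intro μ hm hN
    rw [syt_rec m μ hm N hN, Nat.cast_sum, Finset.sum_mul]
    have hs := VD_sum (fun i => (XX m μ i : ℚ))
    have hsum : (∑ i, (XX m μ i : ℚ) - ∑ i : Fin m, ((i : ℕ) : ℚ)) = N + 1 := by
      have := sum_XX m μ hm
      rw [hN] at this
      have h2 : ((∑ i, XX m μ i : ℕ) : ℚ) = ((N + 1 + ∑ i : Fin m, (i : ℕ) : ℕ) : ℚ) := by rw [this]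
      push_cast at h2
      linarith
    rw [hsum] at hs
    rw [Nat.factorial_succ]
    push_cast
    rw [mul_comm ((N : ℚ) + 1), mul_assoc, ← hs, Finset.mul_sum]
    refine Finset.sum_congr rfl fun i _ => ?_
    split_ifs with hcor
    · have hpos : 0 < μ.rowLen (m - 1 - i) := by unfold Cor at hcor; omega
      set ν := rm μ (m - 1 - i, μ.rowLen (m - 1 - i) - 1) with hν
      have hX : ∀ k, XX m ν k = if k = i then XX m μ i - 1 else XX m μ k := by
        intro k
        unfold XX
        rw [hν, rm_rowLen μ _ hcor]
        by_cases hk : k = i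
        · subst hk; simp; omega
        · rw [if_neg hk, if_neg]
          intro h'; apply hk; apply Fin.ext; omega
      have hXpos : 0 < XX m μ i := by unfold XX; omega
      have hih := ih ν (by
        rw [hν, rm_rowLen μ _ hcor, if_neg, hm]
        have := i.2
        omega) (by have := rm_card μ _ hcor; rw [← hν] at this; omega)
      have hv : (fun k => (XX m ν k : ℚ)) =
          Function.update (fun k => (XX m μ k : ℚ)) i ((XX m μ i : ℚ) - 1) := by
        funext k
        rw [hX]
        by_cases hk : k = i
        · subst hk
          simp [Nat.cast_sub (show 1 ≤ XX m μ k from hXpos)]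
        · simp [hk]
      rw [hv] at hih
      have hprod : ∏ k, ((XX m μ k).factorial : ℚ) =
          XX m μ i * ∏ k, ((XX m ν k).factorial : ℚ) := by
        rw [← Finset.mul_prod_erase _ _ (Finset.mem_univ i),
          ← Finset.mul_prod_erase (a := i) _ _ (Finset.mem_univ i), ← mul_assoc]
        congr 1
        · rw [hX, if_pos rfl]
          exact_mod_cast (Nat.mul_factorial_pred hXpos.ne').symm
        · refine Finset.prod_congr rfl fun k hk => ?_
          rw [hX, if_neg (Finset.ne_of_mem_erase hk)]
      rw [hprod]
      linear_combination (XX m μ i : ℚ) * hih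
    · rw [zero_mul]
      symm
      unfold Cor at hcor
      have hi := i.2
      have hanti := μ.rowLen_anti (m - 1 - i) (m - 1 - i + 1) (by omega)
      by_cases hi0 : (i : ℕ) = 0
      · have : XX m μ i = 0 := by
          unfold XX
          have : m - 1 - (i : ℕ) + 1 = m := by omega
          rw [this] at hcor
          omega
        rw [this]; simp
      · have : VD (Function.update (fun i => (XX m μ i : ℚ)) i ((XX m μ i : ℚ) - 1)) = 0 := by
          unfold VD
          rw [Matrix.det_vandermonde_eq_zero_iff]
          refine ⟨i, ⟨i - 1, by omega⟩, ?_, ?_⟩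
          · rw [Function.update_self, Function.update_of_ne]
            · unfold XX
              simp only
              have e : m - 1 - ((i : ℕ) - 1) = m - 1 - i + 1 := by omega
              rw [e]
              have e2 : μ.rowLen (m - 1 - i + 1) = μ.rowLen (m - 1 - i) := by omega
              rw [e2]
              push_cast [Nat.cast_sub (show 1 ≤ (i : ℕ) by omega)]
              ring
            · intro h'; have := congrArg Fin.val h'; simp only at this; omega
          · intro h'; have := congrArg Fin.val h'; simp only at this; omega
        rw [this]; simp
/-- Bounded semistandard tableaux. -/
def SS (μ : YoungDiagram) (k : ℕ) : Set (SemistandardYoungTableau μ) :=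
  {T | ∀ i j, (i, j) ∈ μ → T i j < k}

lemma SS_finite (μ : YoungDiagram) (k : ℕ) : (SS μ k).Finite := by
  have : Function.Injective (fun (T : SS μ k) (c : μ.cells) =>
      (⟨T.1 c.1.1 c.1.2, T.2 _ _ c.2⟩ : Fin k)) := by
    intro T T' h
    apply Subtype.ext
    apply SemistandardYoungTableau.ext
    intro i j
    by_cases hc : (i, j) ∈ μ
    · have := congrFun h ⟨(i, j), by rwa [mem_cells]⟩
      simpa using this
    · rw [T.1.zeros hc, T'.1.zeros hc]
  exact Set.finite_coe_iff.1 (Finite.of_injective _ this)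

/-- The cells of `μ` with entry less than `k`. -/
def sub {μ : YoungDiagram} (T : SemistandardYoungTableau μ) (k : ℕ) : YoungDiagram where
  cells := μ.cells.filter fun c => T c.1 c.2 < k
  isLowerSet := by
    rintro ⟨a1, a2⟩ ⟨b1, b2⟩ hba ha
    simp only [Finset.coe_filter, Set.mem_ofPred_eq] at *
    obtain ⟨h1, h2⟩ := hba
    refine ⟨μ.isLowerSet ⟨h1, h2⟩ ha.1, ?_⟩
    have h3 : T b1 b2 ≤ T b1 a2 := T.row_weak_of_le h2 (μ.isLowerSet (a := (a1, a2)) ⟨h1, le_rfl⟩ ha.1)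
    have h4 : T b1 a2 ≤ T a1 a2 := T.col_weak h1 ha.1
    omega

lemma mem_sub {μ : YoungDiagram} (T : SemistandardYoungTableau μ) (k i j : ℕ) :
    (i, j) ∈ sub T k ↔ (i, j) ∈ μ ∧ T i j < k := by
  rw [← mem_cells]; simp [sub]

lemma le_entry {μ : YoungDiagram} (T : SemistandardYoungTableau μ) (i j : ℕ) (h : (i, j) ∈ μ) :
    i ≤ T i j := by
  induction i with
  | zero => simp
  | succ i ih =>
    have h1 := T.col_strict (Nat.lt_succ_self i) h
    have h2 := ih (μ.up_left_mem (Nat.le_succ i) le_rfl h)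
    have h3 : T i j < T (i + 1) j := h1
    omega

lemma rowLen_zero_of (μ : YoungDiagram) (r : ℕ) (h : ∀ j, (r, j) ∉ μ) : μ.rowLen r = 0 :=
  rowLen_eq_of μ r 0 (by intro j; simp [h])

lemma sub_rowLen {μ : YoungDiagram} (T : SemistandardYoungTableau μ) (k : ℕ) :
    (sub T k).rowLen k = 0 := by
  apply rowLen_zero_of
  intro j h
  rw [mem_sub] at h
  have := le_entry T k j h.1
  omega

lemma eq_of_XX (k : ℕ) (μ ν : YoungDiagram) (h1 : μ.rowLen k = 0) (h2 : ν.rowLen k = 0)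
    (h : XX k μ = XX k ν) : μ = ν := by
  ext ⟨i, j⟩
  rw [mem_cells, mem_cells, mem_iff_lt_rowLen, mem_iff_lt_rowLen]
  suffices μ.rowLen i = ν.rowLen i by rw [this]
  by_cases hi : i < k
  · have := congrFun h ⟨k - 1 - i, by omega⟩
    unfold XX at this
    have e : k - 1 - (k - 1 - i) = i := by omega
    simp only [e] at this
    omega
  · have := μ.rowLen_anti k i (by omega)
    have := ν.rowLen_anti k i (by omega)
    omega

/-- The diagram inside `μ` with shifted row lengths `y`. -/
def nu (μ : YoungDiagram) (k : ℕ) (y : Fin k → ℕ) : YoungDiagram where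
  cells := μ.cells.filter fun c => c.1 < k ∧ ∀ i : Fin k, k - 1 - i ≤ c.1 → c.2 + i < y i
  isLowerSet := by
    rintro ⟨a1, a2⟩ ⟨b1, b2⟩ hba ha
    simp only [Finset.coe_filter, Set.mem_ofPred_eq] at *
    obtain ⟨h1, h2⟩ := hba
    simp only at h1 h2
    refine ⟨μ.isLowerSet ⟨h1, h2⟩ ha.1, by omega, fun i hi => ?_⟩
    have := ha.2.2 i (by omega)
    omega

lemma mem_nu (μ : YoungDiagram) (k : ℕ) (y : Fin k → ℕ) (a b : ℕ) :
    (a, b) ∈ nu μ k y ↔ (a, b) ∈ μ ∧ a < k ∧ ∀ i : Fin k, k - 1 - i ≤ a → b + i < y i := by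
  rw [← mem_cells]; simp [nu]

lemma nu_rowLen_k (μ : YoungDiagram) (k : ℕ) (y : Fin k → ℕ) : (nu μ k y).rowLen k = 0 := by
  apply rowLen_zero_of
  intro j h
  rw [mem_nu] at h
  omega

/-- The interlacing sequences. -/
def IL (μ : YoungDiagram) (k : ℕ) : Finset (Fin k → ℕ) :=
  Fintype.piFinset (fun i : Fin k =>
    Finset.Ico (XX (k + 1) μ i.castSucc) (XX (k + 1) μ i.succ))

lemma mem_IL (μ : YoungDiagram) (k : ℕ) (y : Fin k → ℕ) : y ∈ IL μ k ↔
    ∀ i : Fin k, μ.rowLen (k - i) + i ≤ y i ∧ y i ≤ μ.rowLen (k - 1 - i) + i := by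
  unfold IL
  rw [Fintype.mem_piFinset]
  refine forall_congr' fun i => ?_
  rw [Finset.mem_Ico]
  unfold XX
  simp only [Fin.val_castSucc, Fin.val_succ]
  have e1 : k + 1 - 1 - (i : ℕ) = k - i := by omega
  have e2 : k + 1 - 1 - ((i : ℕ) + 1) = k - 1 - i := by omega
  rw [e1, e2]
  omega

lemma XX_nu (μ : YoungDiagram) (k : ℕ) (y : Fin k → ℕ) (hy : y ∈ IL μ k) : XX k (nu μ k y) = y := by
  rw [mem_IL] at hy
  funext i
  have hi := i.2
  have : (nu μ k y).rowLen (k - 1 - i) = y i - i := by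
    apply rowLen_eq_of
    intro j
    rw [mem_nu, mem_iff_lt_rowLen]
    constructor
    · rintro ⟨h1, h2, h3⟩
      have := h3 i le_rfl
      omega
    · intro h
      have h1 := hy i
      refine ⟨by omega, by omega, fun i' hi' => ?_⟩
      have h2 := hy i'
      by_cases he : i' = i
      · subst he; omega
      · have hlt : (i : ℕ) < i' := by
          have : (i : ℕ) ≠ i' := fun h => he (Fin.ext h.symm)
          omega
        have := μ.rowLen_anti (k - i') (k - 1 - i) (by omega)
        omega
  unfold XX
  rw [this]
  have := (hy i).1
  omega

lemma XX_sub_mem {μ : YoungDiagram} (k : ℕ) (T : SemistandardYoungTableau μ) (hT : T ∈ SS μ (k + 1)) :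
    XX k (sub T k) ∈ IL μ k := by
  rw [mem_IL]
  intro i
  have hi := i.2
  unfold XX
  constructor
  · suffices μ.rowLen (k - i) ≤ (sub T k).rowLen (k - 1 - i) by omega
    by_contra hlt
    push Not at hlt
    rw [← mem_iff_lt_rowLen] at hlt
    have hmem := μ.up_left_mem (show k - 1 - (i : ℕ) ≤ k - i by omega) le_rfl hlt
    have h1 := T.col_strict (show k - 1 - (i : ℕ) < k - i by omega) hlt
    have h2 := hT _ _ hlt
    have h3 := (mem_sub T k _ _).2 ⟨hmem, by omega⟩
    rw [mem_iff_lt_rowLen] at h3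
    omega
  · suffices (sub T k).rowLen (k - 1 - i) ≤ μ.rowLen (k - 1 - i) by omega
    by_contra hlt
    push Not at hlt
    rw [← mem_iff_lt_rowLen, mem_sub, mem_iff_lt_rowLen] at hlt
    omega

lemma nu_interlace (μ : YoungDiagram) (k : ℕ) (hμ : μ.rowLen (k + 1) = 0) (y : Fin k → ℕ)
    (hy : y ∈ IL μ k) (a b j : ℕ) (hab : a < b) (hb : (b, j) ∈ μ) : (a, j) ∈ nu μ k y := by
  have hbk := lt_of_mem_rows μ _ hμ _ _ hb
  rw [mem_nu]
  refine ⟨μ.up_left_mem hab.le le_rfl hb, by omega, fun i hi => ?_⟩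
  have h1 := ((mem_IL μ k y).1 hy i).1
  rw [mem_iff_lt_rowLen] at hb
  have := μ.rowLen_anti (k - i) b (by omega)
  omega

/-- Restriction of a tableau to a subdiagram. -/
def restr {μ : YoungDiagram} (T : SemistandardYoungTableau μ) (ν : YoungDiagram) (h : ν ≤ μ)
    [DecidablePred (· ∈ ν)] : SemistandardYoungTableau ν where
  entry i j := if (i, j) ∈ ν then T i j else 0
  row_weak' := by
    intro i j1 j2 hj hm
    rw [if_pos hm, if_pos (ν.up_left_mem le_rfl hj.le hm)]
    exact T.row_weak hj (h hm)
  col_strict' := by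
    intro i1 i2 j hi hm
    rw [if_pos hm, if_pos (ν.up_left_mem hi.le le_rfl hm)]
    exact T.col_strict hi (h hm)
  zeros' := by
    intro i j hm
    rw [if_neg hm]

lemma nu_le (μ : YoungDiagram) (k : ℕ) (y : Fin k → ℕ) : nu μ k y ≤ μ := by
  rintro ⟨a, b⟩ h
  exact ((mem_nu μ k y a b).1 h).1

open Classical in
lemma ss_fiber (μ : YoungDiagram) (k : ℕ) (hμ : μ.rowLen (k + 1) = 0) (y : Fin k → ℕ)
    (hy : y ∈ IL μ k) :
    {T | T ∈ SS μ (k + 1) ∧ XX k (sub T k) = y}.ncard = (SS (nu μ k y) k).ncard := by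
  set ν := nu μ k y with hν
  have hsub : ∀ T ∈ {T | T ∈ SS μ (k + 1) ∧ XX k (sub T k) = y}, sub T k = ν := by
    rintro T ⟨-, hT⟩
    exact eq_of_XX k _ _ (sub_rowLen T k) (nu_rowLen_k μ k y) (by rw [hT, XX_nu μ k y hy])
  have hle : ν ≤ μ := nu_le μ k y
  refine Set.ncard_congr (fun T _ => restr T ν hle) ?_ ?_ ?_
  · intro T hT i j hij
    change (if (i, j) ∈ ν then T i j else 0) < k
    rw [if_pos hij]
    rw [← hsub T hT, mem_sub] at hij
    exact hij.2
  · intro T T' hT hT' he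
    apply SemistandardYoungTableau.ext
    intro i j
    have h1 : (if (i, j) ∈ ν then T i j else 0) = (if (i, j) ∈ ν then T' i j else 0) :=
      congrFun (congrFun (congrArg SemistandardYoungTableau.entry he) i) j
    by_cases hij : (i, j) ∈ ν
    · simpa [hij] using h1
    · by_cases hm : (i, j) ∈ μ
      · have a1 := hT.1 i j hm
        have a2 := hT'.1 i j hm
        have b1 := hij
        have b2 := hij
        rw [← hsub T hT, mem_sub] at b1
        rw [← hsub T' hT', mem_sub] at b2
        have : ¬ T i j < k := fun h => b1 ⟨hm, h⟩
        have : ¬ T' i j < k := fun h => b2 ⟨hm, h⟩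
        omega
      · rw [T.zeros hm, T'.zeros hm]
  · intro S hS
    let T : SemistandardYoungTableau μ :=
      { entry := fun i j => if (i, j) ∈ ν then S i j else if (i, j) ∈ μ then k else 0
        row_weak' := by
          intro i j1 j2 hj hm
          have hm1 := μ.up_left_mem le_rfl hj.le hm
          by_cases h2 : (i, j2) ∈ ν
          · have h1 := ν.up_left_mem le_rfl hj.le h2
            rw [if_pos h1, if_pos h2]
            exact S.row_weak hj h2
          · rw [if_neg h2, if_pos hm]
            split_ifs with h1
            · exact (hS _ _ h1).le
            · exact le_rfl
        col_strict' := by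
          intro i1 i2 j hi hm
          have h1 := nu_interlace μ k hμ y hy i1 i2 j hi hm
          rw [← hν] at h1
          rw [if_pos h1]
          split_ifs with h2
          · exact S.col_strict hi h2
          · exact hS _ _ h1
        zeros' := by
          intro i j hm
          rw [if_neg (fun h => hm (hle h)), if_neg hm] }
    have hTe : ∀ i j, T i j = if (i, j) ∈ ν then S i j else if (i, j) ∈ μ then k else 0 :=
      fun i j => rfl
    have hsT : sub T k = ν := by
      ext ⟨i, j⟩
      rw [mem_cells, mem_cells, mem_sub, hTe]
      constructor
      · rintro ⟨h1, h2⟩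
        by_contra h3
        rw [if_neg h3, if_pos h1] at h2
        omega
      · intro h
        rw [if_pos h]
        exact ⟨hle h, hS _ _ h⟩
    refine ⟨T, ⟨?_, ?_⟩, ?_⟩
    · intro i j hij
      rw [hTe, if_pos hij]
      split_ifs with h
      · have := hS _ _ h; omega
      · omega
    · rw [hsT]; exact XX_nu μ k y hy
    · apply SemistandardYoungTableau.ext
      intro i j
      change (if (i, j) ∈ ν then T i j else 0) = _
      rw [hTe]
      split_ifs with h
      · rfl
      · rw [S.zeros h]

lemma ss_formula (k : ℕ) : ∀ (μ : YoungDiagram), μ.rowLen k = 0 →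
    (ssytCount μ k : ℚ) = CD (XX k μ) := by
  induction k with
  | zero =>
    intro μ hμ
    have hno : ∀ i j, (i, j) ∉ μ := by
      intro i j h
      have := lt_of_mem_rows μ 0 hμ i j h
      omega
    have : {T : SemistandardYoungTableau μ | ∀ i j, (i, j) ∈ μ → T i j < 0} = {⟨fun _ _ => 0,
        fun _ h => absurd h (hno _ _), fun _ h => absurd h (hno _ _), fun _ => rfl⟩} := by
      ext T
      constructor
      · intro _
        apply SemistandardYoungTableau.ext
        intro i j
        rw [T.zeros (hno i j)]
        rfl
      · intro _ i j h
        exact absurd h (hno i j)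
    unfold ssytCount CD
    rw [this]
    simp
  | succ k ih =>
    intro μ hμ
    have h1 := ncard_fiber (SS μ (k + 1)) (SS_finite μ (k + 1)) (IL μ k)
      (fun T y => XX k (sub T k) = y) (by
        intro T hT
        refine ⟨_, ⟨XX_sub_mem k T hT, rfl⟩, ?_⟩
        rintro y ⟨-, rfl⟩
        rfl)
    have h2 : ssytCount μ (k + 1) = (SS μ (k + 1)).ncard := rfl
    rw [h2, h1, Nat.cast_sum, ← CD_sum _ (XX_strictMono (k + 1) μ).monotone]
    refine Finset.sum_congr rfl fun y hy => ?_
    rw [ss_fiber μ k hμ y hy]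
    have h3 := ih (nu μ k y) (nu_rowLen_k μ k y)
    rw [XX_nu μ k y hy] at h3
    exact h3
lemma syt_transpose_of (μ : YoungDiagram) (T : ℕ × ℕ → ℕ) (hT : IsSyt μ T) :
    IsSyt μ.transpose (T ∘ Prod.swap) := by
  obtain ⟨hb, hr, hc, hz⟩ := hT
  have hcard : μ.transpose.card = μ.card := by
    unfold YoungDiagram.card YoungDiagram.transpose
    simp
  refine ⟨?_, ?_, ?_, ?_⟩
  · rw [hcard]
    refine hb.comp (t := (μ.cells : Set (ℕ × ℕ))) ⟨?_, Prod.swap_injective.injOn, ?_⟩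
    · intro c h
      have h : c ∈ μ.transpose := h
      rw [mem_transpose] at h
      exact h
    · intro c h
      refine ⟨c.swap, ?_, by simp⟩
      change c.swap ∈ μ.transpose
      rw [mem_transpose]
      simpa using h
  · intro i j h
    rw [mem_transpose] at h
    exact hc j i h
  · intro i j h
    rw [mem_transpose] at h
    exact hr j i h
  · intro c h
    rw [mem_transpose] at h
    exact hz _ h

lemma syt_transpose (μ : YoungDiagram) : sytCount μ.transpose = sytCount μ := by
  unfold sytCount
  have : {T | IsSyt μ.transpose T} = (fun T => T ∘ Prod.swap) '' {T | IsSyt μ T} := by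
    ext T
    constructor
    · intro hT
      refine ⟨T ∘ Prod.swap, ?_, ?_⟩
      · have := syt_transpose_of _ T hT
        rwa [transpose_transpose] at this
      · funext c; simp
    · rintro ⟨T', hT', rfl⟩
      exact syt_transpose_of μ T' hT'
  rw [this]
  apply Set.InjOn.ncard_image
  intro T _ T' _ h
  funext c
  have := congrFun h c.swap
  simpa using this

lemma rect_rowLen (m n i : ℕ) : (rect m n).rowLen i = if i < m then n else 0 := by
  apply rowLen_eq_of
  intro j
  rw [← mem_cells]
  simp only [rect, Finset.mem_product, Finset.mem_range]
  split_ifs with h <;> simp [h]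

lemma comp_rowLen (m n i : ℕ) (μ : YoungDiagram) :
    (complement m n μ).rowLen i = if i < m then n - μ.rowLen (m - 1 - i) else 0 := by
  apply rowLen_eq_of
  intro j
  rw [← mem_cells]
  simp only [complement, Finset.mem_filter, Finset.mem_product, Finset.mem_range]
  split_ifs with h <;> simp [h]
  omega

lemma rowLen_le_of_le (μ ν : YoungDiagram) (h : μ ≤ ν) (i : ℕ) : μ.rowLen i ≤ ν.rowLen i := by
  by_contra hlt
  push Not at hlt
  rw [← mem_iff_lt_rowLen] at hlt
  have := h hlt
  rw [mem_iff_lt_rowLen] at this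
  omega

lemma prod_compl (m n : ℕ) (μ : YoungDiagram) (hr : ∀ i, μ.rowLen i ≤ n) (hc : ∀ j, μ.colLen j ≤ m) :
    (∏ j, ((XX n μ.transpose j).factorial : ℚ)) * ∏ i, ((m + n - 1 - XX m μ i).factorial : ℚ) =
      ∏ k : Fin (n + m), ((k : ℕ).factorial : ℚ) := by
  have hX : ∀ i, XX m μ i < m + n := by
    intro i
    have := hr (m - 1 - i)
    have := i.2
    unfold XX; omega
  have hX' : ∀ j, XX n μ.transpose j < m + n := by
    intro j
    have := hc (n - 1 - j)
    have := j.2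
    unfold XX
    rw [rowLen_transpose]; omega
  let f : Fin n ⊕ Fin m → Fin (n + m) := Sum.elim
    (fun j => ⟨XX n μ.transpose j, by have := hX' j; omega⟩)
    (fun i => ⟨m + n - 1 - XX m μ i, by have := hX i; omega⟩)
  have hcross : ∀ i j, XX n μ.transpose j ≠ m + n - 1 - XX m μ i := by
    intro i j h
    have h1 := hX i
    unfold XX at h h1
    rw [rowLen_transpose] at h
    have hi := i.2
    have hj := j.2
    have e1 := mem_iff_lt_rowLen (μ := μ) (i := m - 1 - i) (j := n - 1 - j)
    have e2 := mem_iff_lt_colLen (μ := μ) (i := m - 1 - i) (j := n - 1 - j)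
    by_cases hm : (m - 1 - (i : ℕ), n - 1 - (j : ℕ)) ∈ μ
    · have := e1.1 hm
      have := e2.1 hm
      omega
    · have := mt e1.2 hm
      have := mt e2.2 hm
      omega
  have hinj : Function.Injective f := by
    rintro (a | a) (b | b) h
    · have := congrArg Fin.val h
      exact congrArg Sum.inl ((XX_strictMono n μ.transpose).injective this)
    · exact absurd (congrArg Fin.val h) (hcross b a)
    · exact absurd (congrArg Fin.val h).symm (hcross a b)
    · have := congrArg Fin.val h
      have this : m + n - 1 - XX m μ a = m + n - 1 - XX m μ b := this
      have h1 := hX a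
      have h2 := hX b
      exact congrArg Sum.inr ((XX_strictMono m μ).injective (by omega))
  have hbij : Function.Bijective f := by
    rw [Fintype.bijective_iff_injective_and_card]
    exact ⟨hinj, by simp⟩
  have := hbij.prod_comp (fun k : Fin (n + m) => ((k : ℕ).factorial : ℚ))
  rw [← this, Fintype.prod_sum_type]
  rfl

/-- the ratio `f^λ f^{n^m/λ} / (s_λ(1^m) s_{λ'}(1^n))` does not depend on
`λ ⊆ n^m` with `|λ| = p`: it equals `f^{n^m} / C(mn,p)`. -/
theorem ratio_constant (m n p : ℕ) (μ : YoungDiagram)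
    (hμ : μ ≤ rect m n) (hp : μ.card = p) :
    (sytCount μ * sytCount (complement m n μ) : ℚ)
        / (ssytCount μ m * ssytCount μ.transpose n)
      = (sytCount (rect m n) : ℚ) / (m * n).choose p := by
  have hr : ∀ i, μ.rowLen i ≤ n := by
    intro i
    have := rowLen_le_of_le μ _ hμ i
    rw [rect_rowLen] at this
    split_ifs at this <;> omega
  have hm0 : μ.rowLen m = 0 := by
    have := rowLen_le_of_le μ _ hμ m
    rw [rect_rowLen] at this
    simpa using this
  have hn0 : μ.transpose.rowLen n = 0 := by
    apply rowLen_zero_of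
    intro j h
    rw [mem_transpose] at h
    have h' : (j, n) ∈ μ := h
    rw [mem_iff_lt_rowLen] at h'
    have := hr j
    omega
  have hc : ∀ j, μ.colLen j ≤ m := by
    intro j
    by_contra hlt
    push Not at hlt
    rw [← mem_iff_lt_colLen, mem_iff_lt_rowLen] at hlt
    omega
  have hcm0 : (complement m n μ).rowLen m = 0 := by rw [comp_rowLen]; simp
  have hrm0 : (rect m n).rowLen m = 0 := by rw [rect_rowLen]; simp
  have hrc : (rect m n).card = m * n := by
    unfold YoungDiagram.card rect; simp
  have hpt : μ.transpose.card = p := by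
    rw [← hp]; unfold YoungDiagram.card YoungDiagram.transpose; simp
  -- shifted rows of the complement
  have hXc : ∀ i : Fin m, XX m (complement m n μ) i = m + n - 1 - XX m μ i.rev := by
    intro i
    have hi := i.2
    have := hr i
    unfold XX
    rw [comp_rowLen, Fin.val_rev]
    have e : m - 1 - (m - 1 - (i : ℕ)) = i := by omega
    have e2 : m - ((i : ℕ) + 1) = m - 1 - i := by omega
    rw [if_pos (by omega), e, e2, e]
    omega
  have hXlt : ∀ i, XX m μ i ≤ m + n - 1 := by
    intro i
    have := hr (m - 1 - i)
    have := i.2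
    unfold XX; omega
  have hXR : ∀ i : Fin m, XX m (rect m n) i = n + i := by
    intro i
    have hi := i.2
    unfold XX
    rw [rect_rowLen, if_pos (by omega)]
  -- cardinality of the complement
  have hcc : (complement m n μ).card + p = m * n := by
    have h1 := sum_XX m μ hm0
    have h2 := sum_XX m _ hcm0
    have h3 := sum_XX m _ hrm0
    rw [hrc] at h3
    have h4 : ∑ i, XX m (complement m n μ) i + ∑ i, XX m μ i = ∑ i : Fin m, (m + n - 1) := by
      have := Equiv.sum_comp (Fin.revPerm (n := m)) (fun i => XX m μ i)
      rw [← this, ← Finset.sum_add_distrib]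
      refine Finset.sum_congr rfl fun i _ => ?_
      rw [hXc, Fin.revPerm_apply]
      have := hXlt i.rev
      omega
    have h5 : ∑ i, XX m (rect m n) i + ∑ i : Fin m, (i : ℕ) = ∑ i : Fin m, (m + n - 1) := by
      have := Equiv.sum_comp (Fin.revPerm (n := m)) (fun i => (i : ℕ))
      rw [← this, ← Finset.sum_add_distrib]
      refine Finset.sum_congr rfl fun i _ => ?_
      rw [hXR, Fin.revPerm_apply, Fin.val_rev]
      have := i.2
      omega
    omega
  have hple : p ≤ m * n := by omega
  have hccard : (complement m n μ).card = m * n - p := by omega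
  -- the five product formulas
  have F1 := syt_formula m p μ hm0 hp
  have F2 := syt_formula n p μ.transpose hn0 hpt
  rw [syt_transpose] at F2
  have F3 := syt_formula m _ (complement m n μ) hcm0 hccard
  have F4 := syt_formula m _ (rect m n) hrm0 hrc
  have G1 := VD_CD (XX m μ)
  rw [← ss_formula m μ hm0] at G1
  have G2 := VD_CD (XX n μ.transpose)
  rw [← ss_formula n μ.transpose hn0] at G2
  have P := prod_compl m n μ hr hc
  have V3 : VD (fun i => (XX m (complement m n μ) i : ℚ)) = VD (fun i => (XX m μ i : ℚ)) := by
    rw [← VD_rev (fun i => (XX m μ i : ℚ)) ((m + n - 1 : ℕ) : ℚ)]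
    congr 1
    funext i
    rw [hXc, Nat.cast_sub (hXlt _)]
  have Y3 : ∏ i, ((XX m (complement m n μ) i).factorial : ℚ) =
      ∏ i, ((m + n - 1 - XX m μ i).factorial : ℚ) := by
    have := Equiv.prod_comp (Fin.revPerm (n := m))
      (fun i => ((m + n - 1 - XX m μ i).factorial : ℚ))
    rw [← this]
    refine Finset.prod_congr rfl fun i _ => ?_
    rw [hXc, Fin.revPerm_apply]
  have V4 : VD (fun i => (XX m (rect m n) i : ℚ)) = ∏ i : Fin m, ((i : ℕ).factorial : ℚ) := by
    rw [← VD_id]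
    unfold VD
    rw [← Matrix.det_vandermonde_add (fun i : Fin m => ((i : ℕ) : ℚ)) (n : ℚ)]
    congr 2
    funext i
    rw [hXR]; push_cast; ring
  have Y4 : ∏ k : Fin (n + m), ((k : ℕ).factorial : ℚ) = (∏ j : Fin n, ((j : ℕ).factorial : ℚ)) *
      ∏ i, ((XX m (rect m n) i).factorial : ℚ) := by
    rw [Fin.prod_univ_add]
    simp only [hXR, Fin.val_castAdd, Fin.val_natAdd]
  have hV : VD (fun i => (XX m μ i : ℚ)) ≠ 0 := by
    unfold VD
    rw [Matrix.det_vandermonde_ne_zero_iff]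
    exact Nat.cast_injective.comp (XX_strictMono m μ).injective
  have hV' : VD (fun i => (XX n μ.transpose i : ℚ)) ≠ 0 := by
    unfold VD
    rw [Matrix.det_vandermonde_ne_zero_iff]
    exact Nat.cast_injective.comp (XX_strictMono n μ.transpose).injective
  have hpos : ∀ (k : ℕ) (g : Fin k → ℕ), ∏ i, ((g i).factorial : ℚ) ≠ 0 := fun k g =>
    Finset.prod_ne_zero_iff.2 fun i _ => by exact_mod_cast (g i).factorial_ne_zero
  rw [V3, Y3] at F3
  rw [V4] at F4
  rw [Y4] at P
  have hchoose : ((m * n).choose p : ℚ) * p.factorial * (m * n - p).factorial = (m * n).factorial := by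
    exact_mod_cast Nat.choose_mul_factorial_mul_factorial hple
  have nX := hpos m (XX m μ)
  have nX' := hpos n (XX n μ.transpose)
  have nY := hpos m (fun i => m + n - 1 - XX m μ i)
  have nR := hpos m (XX m (rect m n))
  have nm := hpos m (fun i => i)
  have nn := hpos n (fun i => i)
  have nC : ((m * n).choose p : ℚ) ≠ 0 := by exact_mod_cast (Nat.choose_pos hple).ne'
  have np : (p.factorial : ℚ) ≠ 0 := by exact_mod_cast p.factorial_ne_zero
  generalize (∏ i, ((XX m μ i).factorial : ℚ)) = X at *
  generalize (∏ i, ((XX n μ.transpose i).factorial : ℚ)) = X' at *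
  generalize (∏ i, ((m + n - 1 - XX m μ i).factorial : ℚ)) = Y at *
  generalize (∏ i, ((XX m (rect m n) i).factorial : ℚ)) = R at *
  generalize (∏ i : Fin m, ((i : ℕ).factorial : ℚ)) = A at *
  generalize (∏ i : Fin n, ((i : ℕ).factorial : ℚ)) = B at *
  generalize VD (fun i => (XX m μ i : ℚ)) = V at *
  generalize VD (fun i => (XX n μ.transpose i : ℚ)) = V' at *
  generalize (sytCount μ : ℚ) = f at *
  generalize (sytCount (complement m n μ) : ℚ) = fc at *
  generalize (sytCount (rect m n) : ℚ) = fr at *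
  generalize (ssytCount μ m : ℚ) = s at *
  generalize (ssytCount μ.transpose n : ℚ) = s' at *
  generalize ((m * n).choose p : ℚ) = C at *
  generalize (p.factorial : ℚ) = a at *
  generalize ((m * n - p).factorial : ℚ) = b at *
  generalize ((m * n).factorial : ℚ) = d at *
  have hs : s ≠ 0 := by rintro rfl; apply hV; rw [G1]; ring
  have hs' : s' ≠ 0 := by rintro rfl; apply hV'; rw [G2]; ring
  rw [div_eq_div_iff (mul_ne_zero hs hs') nC]
  have key : a * A * B * R * (f * fc * C) = a * A * B * R * (fr * (s * s')) := by
    calc a * A * B * R * (f * fc * C) = a * A * C * f * fc * (B * R) := by ring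
      _ = a * A * C * (f * X') * (fc * Y) := by rw [← P]; ring
      _ = (C * a * b) * A * a * V * V' := by rw [F2, F3]; ring
      _ = (fr * R) * a * (A * s) * (B * s') := by rw [hchoose, F4, ← G1, ← G2]
      _ = a * A * B * R * (fr * (s * s')) := by ring
  exact mul_left_cancel₀ (mul_ne_zero (mul_ne_zero (mul_ne_zero np nm) nn) nR) key
end

section
/- For a partition λ ⊆ n^m with p boxes, s_λ(1^m) · s_{λ'}(1^n) = (∏_{□∈λ}(m + c(□))) · (∏_{□∈ n^m ∖ λ}(m + c(□))) / (H_λ · H_{λ̄}) = H_{n^m}/(H_λ · H_{λ̄}). -/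
open YoungDiagram Finset

namespace HC

theorem sum_choose_Ico (a b j : ℕ) (h : a ≤ b) :
    ∑ x ∈ Finset.Ico a b, ((x.choose j : ℕ) : ℤ) = (b.choose (j + 1) : ℤ) - (a.choose (j + 1) : ℤ) := by
  induction b, h using Nat.le_induction with
  | base => simp
  | succ b hb ih =>
    rw [Finset.sum_Ico_succ_top hb, ih, Nat.choose_succ_succ b j]
    push_cast
    ring

/-- the binomial determinant -/
def cdet (k : ℕ) (L : Fin k → ℕ) : ℤ :=
  (Matrix.of fun i j : Fin k => ((L i).choose j : ℤ)).det

theorem cdet_succ (k : ℕ) (L : Fin (k + 1) → ℕ) (hL : ∀ i : Fin k, L i.castSucc ≤ L i.succ) :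
    cdet (k + 1) L =
      ∑ x ∈ Fintype.piFinset (fun i : Fin k => Finset.Ico (L i.castSucc) (L i.succ)), cdet k x := by
  have h2 := (Matrix.detRowAlternating (R := ℤ) (n := Fin k)).toMultilinearMap.map_sum_finset
    (fun (_ : Fin k) (x : ℕ) => fun j : Fin k => ((x.choose j : ℕ) : ℤ))
    (fun i : Fin k => Finset.Ico (L i.castSucc) (L i.succ))
  have h3 : cdet (k + 1) L = (Matrix.of fun i j : Fin (k + 1) =>
      (Fin.cases ((L 0).choose j : ℤ)
        (fun i' => ((L i'.succ).choose j : ℤ) - ((L i'.castSucc).choose j : ℤ)) i : ℤ)).det := by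
    unfold cdet
    apply Matrix.det_eq_of_forall_row_eq_smul_add_pred (fun _ => 1)
    · intro j; simp
    · intro i j; simp
  rw [h3, Matrix.det_succ_column_zero, Fin.sum_univ_succ]
  simp only [Matrix.of_apply, Fin.cases_succ, Fin.cases_zero]
  simp only [Fin.val_zero, Nat.choose_zero_right, Nat.cast_one, sub_self, mul_zero, zero_mul,
    Finset.sum_const_zero, add_zero, pow_zero, one_mul]
  refine Eq.trans ?_ h2
  change Matrix.det _ = Matrix.det _
  congr 1
  ext i j
  simp only [Matrix.submatrix_apply, Matrix.of_apply, Fin.succAbove_zero, Fin.cases_succ,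
    Finset.sum_apply, Fin.val_succ]
  rw [sum_choose_Ico _ _ _ (hL i)]

theorem cdet_vandermonde (k : ℕ) (L : Fin k → ℕ) :
    (∏ i ∈ Finset.range k, (i.factorial : ℤ)) * cdet k L
      = ∏ i : Fin k, ∏ j ∈ Finset.Ioi i, ((L j : ℤ) - (L i : ℤ)) := by
  rw [← Matrix.det_vandermonde (fun i => (L i : ℤ)),
    Matrix.det_eval_matrixOfPolynomials_eq_det_vandermonde (fun i ↦ (L i : ℤ))
      (fun i => descPochhammer ℤ i)
      (fun i => descPochhammer_natDegree ℤ i)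
      (fun i => monic_descPochhammer ℤ i)]
  rw [← Fin.prod_univ_eq_prod_range (fun i => (i.factorial : ℤ)) k, cdet, ← Matrix.det_mul_row]
  congr 1
  ext i j
  simp only [Matrix.of_apply]
  rw [descPochhammer_eval_eq_descFactorial, Nat.descFactorial_eq_factorial_mul_choose]
  push_cast; rfl

theorem ssyt_finite (μ : YoungDiagram) (k : ℕ) :
    {T : SemistandardYoungTableau μ | ∀ i j, (i, j) ∈ μ → T i j < k}.Finite := by
  rw [← Set.finite_coe_iff]
  apply Finite.of_injective (β := μ.cells → Fin k)
    (fun T c => ⟨T.1 c.1.1 c.1.2, T.2 _ _ (by simpa using c.2)⟩)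
  intro T T' h
  apply Subtype.ext
  ext i j
  by_cases hc : (i, j) ∈ μ
  · have := congrFun h ⟨(i, j), by simpa using hc⟩
    simpa using this
  · rw [T.1.zeros hc, T'.1.zeros hc]

theorem fiber_card (μ ν : YoungDiagram) (k : ℕ) (h : ν ≤ μ)
    (hs : ∀ i j, (i + 1, j) ∈ μ → (i, j) ∈ ν) :
    Set.ncard {T : SemistandardYoungTableau μ | (∀ i j, (i, j) ∈ μ → T i j < k + 1) ∧
      ∀ i j, (i, j) ∈ μ → (T i j < k ↔ (i, j) ∈ ν)} = ssytCount ν k := by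
  unfold ssytCount
  have hsub : ∀ {i j}, (i, j) ∈ ν → (i, j) ∈ μ := fun hc => h hc
  refine Set.ncard_congr (fun T _ =>
    { entry := fun i j => if (i, j) ∈ ν then T i j else 0
      row_weak' := ?_, col_strict' := ?_, zeros' := ?_ }) ?_ ?_ ?_
  · intro i j1 j2 hj hc
    rw [if_pos hc, if_pos (ν.up_left_mem le_rfl hj.le hc)]
    exact T.row_weak hj (hsub hc)
  · intro i1 i2 j hj hc
    rw [if_pos hc, if_pos (ν.up_left_mem hj.le le_rfl hc)]
    exact T.col_strict hj (hsub hc)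
  · intro i j hc
    rw [if_neg hc]
  · rintro T ⟨h1, h2⟩ i j hc
    change (if (i, j) ∈ ν then T i j else 0) < k
    rw [if_pos hc]
    exact (h2 i j (hsub hc)).2 hc
  · rintro T T' ⟨h1, h2⟩ ⟨h1', h2'⟩ he
    ext i j
    by_cases hν : (i, j) ∈ ν
    · have := congrArg (fun U : SemistandardYoungTableau ν => U i j) he
      change (if (i, j) ∈ ν then T i j else 0) = (if (i, j) ∈ ν then T' i j else 0) at this
      simpa [hν] using this
    · by_cases hm : (i, j) ∈ μ
      · have a1 := h1 i j hm
        have a2 := h1' i j hm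
        have a3 := h2 i j hm
        have a4 := h2' i j hm
        simp only [hν, iff_false] at a3 a4
        omega
      · rw [T.zeros hm, T'.zeros hm]
  · intro U hU
    refine ⟨{ entry := fun i j => if (i, j) ∈ ν then U i j else if (i, j) ∈ μ then k else 0
              row_weak' := ?_, col_strict' := ?_, zeros' := ?_ }, ⟨?_, ?_⟩, ?_⟩
    · intro i j1 j2 hj hc
      have hc1 := μ.up_left_mem le_rfl hj.le hc
      by_cases b2 : (i, j2) ∈ ν
      · rw [if_pos b2, if_pos (ν.up_left_mem le_rfl hj.le b2)]
        exact U.row_weak hj b2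
      · rw [if_neg b2, if_pos hc]
        split_ifs with b1
        · exact (hU _ _ b1).le
        · exact le_rfl
    · intro i1 i2 j hj hc
      have b1 : (i1, j) ∈ ν := hs i1 j (μ.up_left_mem hj le_rfl hc)
      rw [if_pos b1]
      split_ifs with b2
      · exact U.col_strict hj b2
      · exact hU _ _ b1
    · intro i j hc
      rw [if_neg (fun b => hc (hsub b)), if_neg hc]
    · intro i j hc
      change (if (i, j) ∈ ν then U i j else if (i, j) ∈ μ then k else 0) < k + 1
      split_ifs with b
      · exact (hU _ _ b).trans (Nat.lt_succ_self k)
      · exact Nat.lt_succ_self k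
    · intro i j hc
      change (if (i, j) ∈ ν then U i j else if (i, j) ∈ μ then k else 0) < k ↔ _
      by_cases b : (i, j) ∈ ν
      · simp [b, hU _ _ b]
      · simp [b, hc]
    · ext i j
      change (if (i, j) ∈ ν then (if (i, j) ∈ ν then U i j else if (i, j) ∈ μ then k else 0) else 0) = U i j
      by_cases b : (i, j) ∈ ν
      · simp [b]
      · simp [b, U.zeros b]

/-- cells with small entries -/
def lowShape {μ : YoungDiagram} (T : SemistandardYoungTableau μ) (k : ℕ) : YoungDiagram where
  cells := μ.cells.filter fun c => T c.1 c.2 < k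
  isLowerSet := by
    rintro ⟨a1, a2⟩ ⟨b1, b2⟩ ⟨h1, h2⟩ hb
    simp only [Finset.coe_filter, Set.mem_ofPred_eq, YoungDiagram.mem_cells] at *
    refine ⟨μ.up_left_mem h1 h2 hb.1, ?_⟩
    have e1 := T.row_weak_of_le h2 (μ.up_left_mem h1 le_rfl hb.1)
    have e2 := T.col_weak h1 hb.1
    omega

theorem mem_lowShape {μ : YoungDiagram} (T : SemistandardYoungTableau μ) (k i j : ℕ) :
    (i, j) ∈ lowShape T k ↔ (i, j) ∈ μ ∧ T i j < k := by
  rw [← YoungDiagram.mem_cells]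
  simp [lowShape]

theorem entry_ge {μ : YoungDiagram} (T : SemistandardYoungTableau μ) (i j : ℕ)
    (h : (i, j) ∈ μ) : i ≤ T i j := by
  induction i with
  | zero => simp
  | succ i ih =>
    have := ih (μ.up_left_mem (Nat.le_succ i) le_rfl h)
    have := T.col_strict (show i < i + 1 by omega) h
    omega

theorem rowLen_le_iff (μ : YoungDiagram) (i a : ℕ) : μ.rowLen i ≤ a ↔ (i, a) ∉ μ := by
  rw [YoungDiagram.mem_iff_lt_rowLen]; omega

theorem rowLen_eq_of (μ : YoungDiagram) (i a : ℕ) (h : ∀ j, (i, j) ∈ μ ↔ j < a) :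
    μ.rowLen i = a := by
  have h1 := h (μ.rowLen i)
  have h2 := h a
  rw [YoungDiagram.mem_iff_lt_rowLen] at h1 h2
  omega

theorem shape_exists (μ : YoungDiagram) (k : ℕ) (x : Fin k → ℕ)
    (hx : ∀ i : Fin k, μ.rowLen (k - i) + i ≤ x i ∧ x i < μ.rowLen (k - (i + 1)) + (i + 1)) :
    ∃ ν : YoungDiagram, ν ≤ μ ∧ (∀ i j, (i + 1, j) ∈ μ → i < k → (i, j) ∈ ν) ∧
      (∀ i : Fin k, ν.rowLen (k - 1 - i) + i = x i) ∧ ν.rowLen k = 0 := by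
  have key : ∀ i j, (∃ h : i < k, j + (k - 1 - i) < x ⟨k - 1 - i, by omega⟩) → (i, j) ∈ μ := by
    rintro i j ⟨h, hj⟩
    have := (hx ⟨k - 1 - i, by omega⟩).2
    simp only at this
    rw [show k - (k - 1 - i + 1) = i by omega] at this
    rw [YoungDiagram.mem_iff_lt_rowLen]; omega
  classical
  let ν : YoungDiagram :=
    { cells := μ.cells.filter
        (fun c => ∃ h : c.1 < k, c.2 + (k - 1 - c.1) < x ⟨k - 1 - c.1, by omega⟩)
      isLowerSet := by
        rintro ⟨a1, a2⟩ ⟨b1, b2⟩ ⟨h1, h2⟩ hb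
        simp only at h1 h2
        simp only [Finset.coe_filter, Set.mem_ofPred_eq, YoungDiagram.mem_cells] at *
        obtain ⟨hb1, hk, hb2⟩ := hb
        refine ⟨μ.up_left_mem h1 h2 hb1, by omega, ?_⟩
        rcases Nat.eq_or_lt_of_le h1 with rfl | hlt
        · omega
        · have e1 := (hx ⟨k - 1 - a1, by omega⟩).2
          have e2 := (hx ⟨k - 1 - b1, by omega⟩).1
          simp only at e1 e2
          have e3 := μ.rowLen_anti (k - (k - 1 - b1)) (k - (k - 1 - a1 + 1)) (by omega)
          omega }
  have hν : ∀ i j, (i, j) ∈ ν ↔ ∃ h : i < k, j + (k - 1 - i) < x ⟨k - 1 - i, by omega⟩ := by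
    intro i j
    rw [← YoungDiagram.mem_cells]
    simp only [ν, Finset.mem_filter, YoungDiagram.mem_cells]
    exact ⟨fun h => h.2, fun h => ⟨key i j h, h⟩⟩
  refine ⟨ν, ?_, ?_, ?_, ?_⟩
  · rintro ⟨i, j⟩ hc
    exact key i j ((hν i j).1 hc)
  · intro i j hc hi
    rw [hν]
    refine ⟨hi, ?_⟩
    have e2 := (hx ⟨k - 1 - i, by omega⟩).1
    simp only at e2
    rw [show k - (k - 1 - i) = i + 1 by omega] at e2
    rw [YoungDiagram.mem_iff_lt_rowLen] at hc
    omega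
  · intro i
    have e2 := (hx i).1
    rw [rowLen_eq_of ν (k - 1 - i) (x i - i)]
    · omega
    · intro j
      rw [hν]
      have hxi : ∀ h, x ⟨k - 1 - (k - 1 - i), h⟩ = x i := by
        intro h; congr 1; ext; simp; omega
      simp only [hxi]
      constructor
      · rintro ⟨_, h⟩; omega
      · intro h; exact ⟨by omega, by omega⟩
  · apply rowLen_eq_of
    intro j
    rw [hν]; simp

theorem ssytCount_eq_cdet (k : ℕ) (μ : YoungDiagram) (hk : μ.rowLen k = 0) :
    (ssytCount μ k : ℤ) = cdet k (fun i => μ.rowLen (k - 1 - i) + i) := by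
  induction k generalizing μ with
  | zero =>
    have hμ : ∀ i j, (i, j) ∉ μ := by
      intro i j hc
      have := μ.up_left_mem (Nat.zero_le i) le_rfl hc
      rw [YoungDiagram.mem_iff_lt_rowLen] at this
      omega
    have : {T : SemistandardYoungTableau μ | ∀ i j, (i, j) ∈ μ → T i j < 0}
        = {SemistandardYoungTableau.highestWeight μ} := by
      ext T
      simp only [Set.mem_ofPred_eq, Set.mem_singleton_iff]
      constructor
      · intro _
        ext i j
        rw [T.zeros (hμ i j), (SemistandardYoungTableau.highestWeight μ).zeros (hμ i j)]
      · intro _ i j hc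
        exact absurd hc (hμ i j)
    rw [ssytCount, this, Set.ncard_singleton]
    simp [cdet]
  | succ k ih =>
    classical
    have hfin := ssyt_finite μ (k + 1)
    let F : SemistandardYoungTableau μ → (Fin k → ℕ) :=
      fun T i => (lowShape T k).rowLen (k - 1 - i) + i
    let L : Fin (k + 1) → ℕ := fun i => μ.rowLen (k - i) + i
    have hL : ∀ i : Fin k, L i.castSucc ≤ L i.succ := by
      intro i
      simp only [L, Fin.val_castSucc, Fin.val_succ]
      have := μ.rowLen_anti (k - (i + 1)) (k - i) (by omega)
      omega
    have hmaps : (hfin.toFinset : Set (SemistandardYoungTableau μ)).MapsTo F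
        (Fintype.piFinset (fun i : Fin k => Finset.Ico (L i.castSucc) (L i.succ)) :
          Finset (Fin k → ℕ)) := by
      intro T hT
      simp only [Set.Finite.coe_toFinset, Set.mem_ofPred_eq] at hT
      simp only [Finset.mem_coe, Fintype.mem_piFinset, Finset.mem_Ico, L, F, Fin.val_castSucc,
        Fin.val_succ]
      intro i
      have hi := i.2
      constructor
      · have : μ.rowLen (k - i) ≤ (lowShape T k).rowLen (k - 1 - i) := by
          rw [rowLen_le_iff]
          intro hc
          have h1 : (k - 1 - i, (lowShape T k).rowLen (k - 1 - i)) ∈ lowShape T k := by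
            rw [mem_lowShape]
            refine ⟨μ.up_left_mem (by omega) le_rfl hc, ?_⟩
            have := T.col_strict (show k - 1 - (i : ℕ) < k - i by omega) hc
            have := hT _ _ hc
            omega
          rw [YoungDiagram.mem_iff_lt_rowLen] at h1
          omega
        omega
      · have : (lowShape T k).rowLen (k - 1 - i) ≤ μ.rowLen (k - (i + 1)) := by
          rw [rowLen_le_iff, mem_lowShape, show k - 1 - (i : ℕ) = k - (i + 1) by omega,
            YoungDiagram.mem_iff_lt_rowLen]
          omega
        omega
    have hcard := Finset.card_eq_sum_card_fiberwise hmaps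
    have h1 : ssytCount μ (k + 1) = hfin.toFinset.card := by
      rw [ssytCount, Set.ncard_eq_toFinset_card _ hfin]
    have h2 : cdet (k + 1) (fun i => μ.rowLen (k + 1 - 1 - i) + i) = cdet (k + 1) L := rfl
    rw [h1, h2, hcard, cdet_succ k L hL]
    push_cast
    apply Finset.sum_congr rfl
    intro x hx
    simp only [Fintype.mem_piFinset, Finset.mem_Ico, L, Fin.val_castSucc, Fin.val_succ] at hx
    obtain ⟨ν, hνμ, hstrip, hrow, hν0⟩ := shape_exists μ k x hx
    have hμk : ∀ i j, (i, j) ∈ μ → i ≤ k := by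
      intro i j hc
      by_contra hi
      have := μ.up_left_mem (show k + 1 ≤ i by omega) le_rfl hc
      rw [YoungDiagram.mem_iff_lt_rowLen] at this
      omega
    have hνk : ∀ i j, (i, j) ∈ ν → i < k := by
      intro i j hc
      by_contra hi
      have := ν.up_left_mem (show k ≤ i by omega) le_rfl hc
      rw [YoungDiagram.mem_iff_lt_rowLen] at this
      omega
    have e : (fun i : Fin k => ν.rowLen (k - 1 - i) + i) = x := funext hrow
    rw [← e, ← ih ν hν0, ← fiber_card μ ν k hνμ
      (fun i j hc => hstrip i j hc (by have := hμk _ _ hc; omega)), e]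
    congr 1
    rw [← Set.ncard_coe_finset]
    congr 1
    ext T
    simp only [Finset.coe_filter, Set.Finite.mem_toFinset, Set.mem_ofPred_eq]
    refine and_congr_right fun hT => ?_
    constructor
    · intro hF i j hc
      by_cases hi : i < k
      · have a1 := congrFun hF ⟨k - 1 - i, by omega⟩
        have a2 := hrow ⟨k - 1 - i, by omega⟩
        simp only [F] at a1 a2
        rw [show k - 1 - (k - 1 - i) = i by omega] at a1 a2
        have a3 : (lowShape T k).rowLen i = ν.rowLen i := by omega
        rw [YoungDiagram.mem_iff_lt_rowLen, ← a3, ← YoungDiagram.mem_iff_lt_rowLen, mem_lowShape]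
        exact ⟨fun h => ⟨hc, h⟩, fun h => h.2⟩
      · have := entry_ge T i j hc
        constructor
        · intro h; omega
        · intro h; exact absurd (hνk _ _ h) hi
    · intro h
      have : lowShape T k = ν := by
        ext ⟨i, j⟩
        rw [YoungDiagram.mem_cells, YoungDiagram.mem_cells, mem_lowShape]
        exact ⟨fun q => (h i j q.1).1 q.2, fun q => ⟨hνμ q, (h i j (hνμ q)).2 q⟩⟩
      funext i
      simp only [F, this]
      exact hrow i

/-- shifted row lengths, in increasing order -/
def Lf (μ : YoungDiagram) (k i : ℕ) : ℕ := μ.rowLen (k - 1 - i) + i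

theorem Lf_lt (μ : YoungDiagram) (k r i : ℕ) (h : r < i) : Lf μ k r < Lf μ k i := by
  have := μ.rowLen_anti (k - 1 - i) (k - 1 - r) (by omega)
  unfold Lf
  omega

theorem prod_pairs (k : ℕ) (L : ℕ → ℤ) :
    ∏ i : Fin k, ∏ j ∈ Finset.Ioi i, (L j - L i)
      = ∏ i ∈ Finset.range k, ∏ r ∈ Finset.range i, (L i - L r) := by
  rw [Finset.prod_comm' (t' := Finset.univ) (s' := fun j : Fin k => Finset.Iio j)
    (by intro x y; simp)]
  rw [← Fin.prod_univ_eq_prod_range (fun i => ∏ r ∈ Finset.range i, (L i - L r)) k]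
  refine Finset.prod_congr rfl fun j _ => ?_
  rw [← Nat.Iio_eq_range, ← Fin.map_valEmbedding_Iio, Finset.prod_map]
  rfl

theorem weyl (k : ℕ) (μ : YoungDiagram) (hk : μ.rowLen k = 0) :
    (∏ i ∈ Finset.range k, (i.factorial : ℤ)) * (ssytCount μ k : ℤ)
      = ∏ i ∈ Finset.range k, ∏ r ∈ Finset.range i, ((Lf μ k i : ℤ) - (Lf μ k r : ℤ)) := by
  rw [ssytCount_eq_cdet k μ hk, cdet_vandermonde, ← prod_pairs k (fun i => (Lf μ k i : ℤ))]
  rfl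

theorem row_zero (k : ℕ) (μ : YoungDiagram) (hk : μ.rowLen k = 0) (i j : ℕ)
    (h : (i, j) ∈ μ) : i < k := by
  by_contra hi
  have := μ.up_left_mem (show k ≤ i by omega) le_rfl h
  rw [YoungDiagram.mem_iff_lt_rowLen] at this
  omega

theorem prod_cells (k : ℕ) (μ : YoungDiagram) (hk : μ.rowLen k = 0) (f : ℕ × ℕ → ℤ) :
    ∏ c ∈ μ.cells, f c
      = ∏ i ∈ Finset.range k, ∏ j ∈ Finset.range (μ.rowLen (k - 1 - i)), f (k - 1 - i, j) := by
  rw [Finset.prod_range_reflect (fun i => ∏ j ∈ Finset.range (μ.rowLen i), f (i, j)) k]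
  apply Finset.prod_finset_product
  rintro ⟨i, j⟩
  simp only [YoungDiagram.mem_cells, Finset.mem_range, ← YoungDiagram.mem_iff_lt_rowLen]
  exact ⟨fun h => ⟨row_zero k μ hk i j h, h⟩, fun h => h.2⟩

theorem row_hook (k : ℕ) (μ : YoungDiagram) (hk : μ.rowLen k = 0) (i : ℕ) (hi : i < k) :
    (∏ j ∈ Finset.range (μ.rowLen (k - 1 - i)), hookLength μ (k - 1 - i, j))
      * ∏ r ∈ Finset.range i, (Lf μ k i - Lf μ k r) = (Lf μ k i).factorial := by
  set a := k - 1 - i with ha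
  have hLi : Lf μ k i = μ.rowLen a + i := rfl
  have hcol : ∀ j, j < μ.rowLen a → a < μ.colLen j ∧ μ.colLen j ≤ k := by
    intro j hj
    refine ⟨?_, ?_⟩
    · rwa [← YoungDiagram.mem_iff_lt_colLen, YoungDiagram.mem_iff_lt_rowLen]
    · by_contra hc
      have h1 : (k, j) ∈ μ := by rw [YoungDiagram.mem_iff_lt_colLen]; omega
      exact absurd (row_zero k μ hk k j h1) (lt_irrefl k)
  have hh : ∀ j, hookLength μ (a, j) = (μ.rowLen a - j) + (μ.colLen j - a) - 1 := fun _ => rfl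
  have inj1 : Set.InjOn (fun j => hookLength μ (a, j)) (Finset.range (μ.rowLen a)) := by
    have aux : ∀ j1 j2, j1 < j2 → j2 < μ.rowLen a →
        hookLength μ (a, j2) < hookLength μ (a, j1) := by
      intro j1 j2 h12 h2
      have := hcol j1 (by omega)
      have := hcol j2 h2
      have := μ.colLen_anti j1 j2 h12.le
      rw [hh, hh]
      omega
    intro j1 h1 j2 h2 he
    simp only [Finset.coe_range, Set.mem_Iio] at h1 h2
    simp only at he
    rcases lt_trichotomy j1 j2 with h | h | h
    · have := aux _ _ h h2; omega
    · exact h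
    · have := aux _ _ h h1; omega
  have inj2 : Set.InjOn (fun r => Lf μ k i - Lf μ k r) (Finset.range i) := by
    intro r1 h1 r2 h2 he
    simp only [Finset.coe_range, Set.mem_Iio] at h1 h2
    simp only at he
    have a1 := Lf_lt μ k r1 i h1
    have a2 := Lf_lt μ k r2 i h2
    rcases lt_trichotomy r1 r2 with h | h | h
    · have := Lf_lt μ k _ _ h; omega
    · exact h
    · have := Lf_lt μ k _ _ h; omega
  have hdis : Disjoint ((Finset.range (μ.rowLen a)).image (fun j => hookLength μ (a, j)))
      ((Finset.range i).image (fun r => Lf μ k i - Lf μ k r)) := by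
    rw [Finset.disjoint_left]
    intro x hx hy
    simp only [Finset.mem_image, Finset.mem_range] at hx hy
    obtain ⟨j, hj, rfl⟩ := hx
    obtain ⟨r, hr, he⟩ := hy
    have a1 := Lf_lt μ k r i hr
    have a2 := hcol j hj
    rw [hh, hLi] at he
    rw [hLi] at a1
    have hLr : Lf μ k r = μ.rowLen (k - 1 - r) + r := rfl
    have hiff : j < μ.rowLen (k - 1 - r) ↔ k - 1 - r < μ.colLen j := by
      rw [← YoungDiagram.mem_iff_lt_colLen, YoungDiagram.mem_iff_lt_rowLen]
    by_cases hc : j < μ.rowLen (k - 1 - r)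
    · have := hiff.1 hc
      omega
    · have : ¬ (k - 1 - r < μ.colLen j) := fun h => hc (hiff.2 h)
      omega
  have hunion : (Finset.range (μ.rowLen a)).image (fun j => hookLength μ (a, j)) ∪
      (Finset.range i).image (fun r => Lf μ k i - Lf μ k r) = Finset.Icc 1 (Lf μ k i) := by
    apply Finset.eq_of_subset_of_card_le
    · intro x hx
      simp only [Finset.mem_union, Finset.mem_image, Finset.mem_range] at hx
      rw [Finset.mem_Icc]
      rcases hx with ⟨j, hj, rfl⟩ | ⟨r, hr, rfl⟩
      · have a2 := hcol j hj
        rw [hh, hLi]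
        omega
      · have a1 := Lf_lt μ k r i hr
        omega
    · rw [Finset.card_union_of_disjoint hdis, Finset.card_image_of_injOn inj1,
        Finset.card_image_of_injOn inj2]
      simp [hLi]
  rw [← Finset.prod_Ico_id_eq_factorial, Finset.Ico_add_one_right_eq_Icc, ← hunion, Finset.prod_union hdis,
    Finset.prod_image inj1, Finset.prod_image inj2]

theorem row_content (l i : ℕ) :
    (∏ j ∈ Finset.range l, ((i : ℤ) + 1 + j)) * (i.factorial : ℤ) = ((l + i).factorial : ℤ) := by
  induction l with
  | zero => simp
  | succ l ih =>
    rw [Finset.prod_range_succ, mul_right_comm, ih, show l + 1 + i = (l + i) + 1 by ring,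
      Nat.factorial_succ]
    push_cast
    ring

theorem hook_content (k : ℕ) (μ : YoungDiagram) (hk : μ.rowLen k = 0) :
    (ssytCount μ k : ℤ) * (hookProd μ : ℤ) = ∏ c ∈ μ.cells, ((k : ℤ) + c.2 - c.1) := by
  have hW := weyl k μ hk
  have hH : (hookProd μ : ℤ) *
      ∏ i ∈ Finset.range k, ∏ r ∈ Finset.range i, ((Lf μ k i : ℤ) - (Lf μ k r : ℤ))
      = ∏ i ∈ Finset.range k, ((Lf μ k i).factorial : ℤ) := by
    unfold hookProd
    push_cast
    rw [prod_cells k μ hk (fun c => (hookLength μ c : ℤ)), ← Finset.prod_mul_distrib]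
    refine Finset.prod_congr rfl fun i hi => ?_
    rw [← row_hook k μ hk i (Finset.mem_range.1 hi)]
    push_cast
    congr 1
    refine Finset.prod_congr rfl fun r hr => ?_
    rw [Nat.cast_sub (Lf_lt μ k r i (Finset.mem_range.1 hr)).le]
  have hC : (∏ c ∈ μ.cells, ((k : ℤ) + c.2 - c.1)) * (∏ i ∈ Finset.range k, (i.factorial : ℤ))
      = ∏ i ∈ Finset.range k, ((Lf μ k i).factorial : ℤ) := by
    rw [prod_cells k μ hk (fun c => ((k : ℤ) + c.2 - c.1)), ← Finset.prod_mul_distrib]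
    refine Finset.prod_congr rfl fun i hi => ?_
    rw [Lf, ← row_content]
    congr 1
    refine Finset.prod_congr rfl fun j hj => ?_
    have := Finset.mem_range.1 hi
    simp only
    omega
  have hsf : (∏ i ∈ Finset.range k, (i.factorial : ℤ)) ≠ 0 := by
    rw [Finset.prod_ne_zero_iff]
    intro i _
    exact_mod_cast i.factorial_ne_zero
  apply mul_right_cancel₀ hsf
  rw [hC, ← hH, ← hW]
  ring

theorem hookProd_pos (μ : YoungDiagram) : 0 < hookProd μ := by
  apply Finset.prod_pos
  rintro ⟨i, j⟩ hc
  rw [YoungDiagram.mem_cells] at hc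
  have h1 := YoungDiagram.mem_iff_lt_rowLen.1 hc
  have h2 := YoungDiagram.mem_iff_lt_colLen.1 hc
  simp only [hookLength]
  omega

theorem prod_transpose {M : Type*} [CommMonoid M] (μ : YoungDiagram) (f : ℕ × ℕ → M) :
    ∏ c ∈ μ.transpose.cells, f c = ∏ c ∈ μ.cells, f c.swap := by
  refine Finset.prod_nbij' Prod.swap Prod.swap ?_ ?_ ?_ ?_ ?_ <;> simp

theorem hookProd_transpose (μ : YoungDiagram) : hookProd μ.transpose = hookProd μ := by
  unfold hookProd
  rw [prod_transpose]
  refine Finset.prod_congr rfl fun c _ => ?_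
  simp [hookLength, add_comm]

theorem mem_rect (m n i j : ℕ) : (i, j) ∈ rect m n ↔ i < m ∧ j < n := by
  rw [← YoungDiagram.mem_cells]; simp [rect]

theorem mem_complement (m n : ℕ) (μ : YoungDiagram) (i j : ℕ) :
    (i, j) ∈ complement m n μ ↔ i < m ∧ j < n ∧ (m - 1 - i, n - 1 - j) ∉ μ := by
  rw [← YoungDiagram.mem_cells, YoungDiagram.mem_iff_lt_rowLen]
  simp only [complement, Finset.mem_filter, Finset.mem_product, Finset.mem_range]
  omega

theorem complement_transpose (m n : ℕ) (μ : YoungDiagram) :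
    complement n m μ.transpose = (complement m n μ).transpose := by
  ext ⟨i, j⟩
  simp only [YoungDiagram.mem_cells, YoungDiagram.mem_transpose, Prod.swap, mem_complement]
  tauto

theorem rowLen_bound (m n : ℕ) (μ : YoungDiagram) (h : μ ≤ rect m n) (i : ℕ) :
    μ.rowLen i ≤ n := by
  rw [rowLen_le_iff]
  intro hc
  have := (mem_rect m n _ _).1 (h hc)
  omega

theorem rowLen_last (m n : ℕ) (μ : YoungDiagram) (h : μ ≤ rect m n) : μ.rowLen m = 0 := by
  have : μ.rowLen m ≤ 0 := by
    rw [rowLen_le_iff]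
    intro hc
    have := (mem_rect m n _ _).1 (h hc)
    omega
  omega

theorem complement_le (m n : ℕ) (μ : YoungDiagram) : complement m n μ ≤ rect m n := by
  rintro ⟨i, j⟩ hc
  have hc' := (mem_complement m n μ i j).1 hc
  exact (mem_rect m n i j).2 ⟨hc'.1, hc'.2.1⟩

theorem rowLen_complement (m n : ℕ) (μ : YoungDiagram) (i : ℕ) (hi : i < m) :
    (complement m n μ).rowLen i = n - μ.rowLen (m - 1 - i) := by
  apply rowLen_eq_of
  intro j
  rw [mem_complement, YoungDiagram.mem_iff_lt_rowLen]
  omega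

theorem ssytCount_complement (m n : ℕ) (μ : YoungDiagram) (h : μ ≤ rect m n) :
    ssytCount (complement m n μ) m = ssytCount μ m := by
  have h1 := weyl m μ (rowLen_last m n μ h)
  have h2 := weyl m _ (rowLen_last m n _ (complement_le m n μ))
  have hsf : (∏ i ∈ Finset.range m, (i.factorial : ℤ)) ≠ 0 := by
    rw [Finset.prod_ne_zero_iff]
    intro i _
    exact_mod_cast i.factorial_ne_zero
  have h3 : ∀ i, i < m → Lf (complement m n μ) m i + Lf μ m (m - 1 - i) = n + (m - 1) := by
    intro i hi
    have := rowLen_bound m n μ h i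
    simp only [Lf]
    rw [rowLen_complement m n μ _ (by omega), show m - 1 - (m - 1 - i) = i by omega]
    omega
  have : (ssytCount (complement m n μ) m : ℤ) = ssytCount μ m := by
    apply mul_left_cancel₀ hsf
    rw [h1, h2, Finset.prod_sigma', Finset.prod_sigma']
    refine Finset.prod_nbij' (fun p => ⟨m - 1 - p.2, m - 1 - p.1⟩)
      (fun p => ⟨m - 1 - p.2, m - 1 - p.1⟩) ?_ ?_ ?_ ?_ ?_
    · rintro ⟨i, r⟩ hp
      simp only [Finset.mem_sigma, Finset.mem_range] at hp ⊢
      omega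
    · rintro ⟨i, r⟩ hp
      simp only [Finset.mem_sigma, Finset.mem_range] at hp ⊢
      omega
    · rintro ⟨i, r⟩ hp
      simp only [Finset.mem_sigma, Finset.mem_range] at hp
      simp only [Sigma.mk.injEq, heq_eq_eq]
      omega
    · rintro ⟨i, r⟩ hp
      simp only [Finset.mem_sigma, Finset.mem_range] at hp
      simp only [Sigma.mk.injEq, heq_eq_eq]
      omega
    · rintro ⟨i, r⟩ hp
      simp only [Finset.mem_sigma, Finset.mem_range] at hp
      have e1 := h3 i hp.1
      have e2 := h3 r (by omega)
      simp only
      omega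
  exact_mod_cast this

theorem prod_complement (m n : ℕ) (μ : YoungDiagram) :
    ∏ c ∈ (complement m n μ).cells, ((n : ℤ) + c.1 - c.2)
      = ∏ c ∈ (rect m n).cells \ μ.cells, ((m : ℤ) + c.2 - c.1) := by
  refine Finset.prod_nbij' (fun c => (m - 1 - c.1, n - 1 - c.2))
    (fun c => (m - 1 - c.1, n - 1 - c.2)) ?_ ?_ ?_ ?_ ?_
  · rintro ⟨i, j⟩ hc
    simp only [YoungDiagram.mem_cells, mem_complement] at hc
    simp only [Finset.mem_sdiff, YoungDiagram.mem_cells, mem_rect]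
    exact ⟨by omega, hc.2.2⟩
  · rintro ⟨i, j⟩ hc
    simp only [Finset.mem_sdiff, YoungDiagram.mem_cells, mem_rect] at hc
    simp only [YoungDiagram.mem_cells, mem_complement]
    rw [show m - 1 - (m - 1 - i) = i by omega, show n - 1 - (n - 1 - j) = j by omega]
    exact ⟨by omega, by omega, hc.2⟩
  · rintro ⟨i, j⟩ hc
    simp only [YoungDiagram.mem_cells, mem_complement] at hc
    simp only [Prod.mk.injEq]
    omega
  · rintro ⟨i, j⟩ hc
    simp only [Finset.mem_sdiff, YoungDiagram.mem_cells, mem_rect] at hc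
    simp only [Prod.mk.injEq]
    omega
  · rintro ⟨i, j⟩ hc
    simp only [YoungDiagram.mem_cells, mem_complement] at hc
    simp only
    omega

theorem hookProd_rect (m n : ℕ) :
    (hookProd (rect m n) : ℤ) = ∏ c ∈ (rect m n).cells, ((m : ℤ) + c.2 - c.1) := by
  unfold hookProd
  push_cast
  refine Finset.prod_nbij' (fun c => (c.1, n - 1 - c.2))
    (fun c => (c.1, n - 1 - c.2)) ?_ ?_ ?_ ?_ ?_
  · rintro ⟨i, j⟩ hc
    simp only [YoungDiagram.mem_cells, mem_rect] at hc ⊢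
    omega
  · rintro ⟨i, j⟩ hc
    simp only [YoungDiagram.mem_cells, mem_rect] at hc ⊢
    omega
  · rintro ⟨i, j⟩ hc
    simp only [YoungDiagram.mem_cells, mem_rect] at hc
    simp only [Prod.mk.injEq, true_and]
    omega
  · rintro ⟨i, j⟩ hc
    simp only [YoungDiagram.mem_cells, mem_rect] at hc
    simp only [Prod.mk.injEq, true_and]
    omega
  · rintro ⟨i, j⟩ hc
    simp only [YoungDiagram.mem_cells, mem_rect] at hc
    have h1 : (rect m n).rowLen i = n := by
      apply rowLen_eq_of
      intro j'
      rw [mem_rect]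
      omega
    have h2 : (rect m n).colLen j = m := by
      rw [← YoungDiagram.rowLen_transpose]
      apply rowLen_eq_of
      intro i'
      rw [YoungDiagram.mem_transpose]
      simp only [Prod.swap, mem_rect]
      omega
    simp only [hookLength, h1, h2]
    omega

end HC

/-- hook–content computation:
`s_λ(1^m)·s_{λ'}(1^n) = (∏_{□∈λ}(m+c(□)))·(∏_{□∈n^m∖λ}(m+c(□)))/(H_λ H_λ̄) = H_{n^m}/(H_λ H_λ̄)`,
contents in the second product taken in the coordinates of the rectangle. -/
theorem ssyt_product_hook_content (m n p : ℕ) (μ : YoungDiagram)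
    (hμ : μ ≤ rect m n) (hp : μ.card = p) :
    ((ssytCount μ m * ssytCount μ.transpose n : ℚ)
        = (∏ c ∈ μ.cells, ((m : ℚ) + c.2 - c.1))
            * (∏ c ∈ (rect m n).cells \ μ.cells, ((m : ℚ) + c.2 - c.1))
            / (hookProd μ * hookProd (complement m n μ))) ∧
    (ssytCount μ m * ssytCount μ.transpose n : ℚ)
        = (hookProd (rect m n) : ℚ) / (hookProd μ * hookProd (complement m n μ)) := by

  have hA := HC.hook_content m μ (HC.rowLen_last m n μ hμ)
  have hμ' : μ.transpose ≤ rect n m := by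
    rintro ⟨i, j⟩ hc
    have := (HC.mem_rect m n j i).1 (hμ (YoungDiagram.mem_transpose.1 hc))
    exact (HC.mem_rect n m i j).2 ⟨this.2, this.1⟩
  have hB := HC.hook_content n _ (HC.rowLen_last n m _ (HC.complement_le n m μ.transpose))
  rw [HC.ssytCount_complement n m _ hμ', HC.complement_transpose, HC.hookProd_transpose,
    HC.prod_transpose] at hB
  simp only [Prod.fst_swap, Prod.snd_swap] at hB
  rw [HC.prod_complement] at hB
  have hR := HC.hookProd_rect m n
  have h1 : (hookProd μ : ℚ) ≠ 0 := by exact_mod_cast (HC.hookProd_pos μ).ne'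
  have h2 : (hookProd (complement m n μ) : ℚ) ≠ 0 := by
    exact_mod_cast (HC.hookProd_pos (complement m n μ)).ne'
  have hA' := congrArg (fun z : ℤ => (z : ℚ)) hA
  have hB' := congrArg (fun z : ℤ => (z : ℚ)) hB
  have hR' := congrArg (fun z : ℤ => (z : ℚ)) hR
  push_cast at hA' hB' hR'
  have key : (ssytCount μ m * ssytCount μ.transpose n : ℚ)
        = (∏ c ∈ μ.cells, ((m : ℚ) + c.2 - c.1))
            * (∏ c ∈ (rect m n).cells \ μ.cells, ((m : ℚ) + c.2 - c.1))
            / (hookProd μ * hookProd (complement m n μ)) := by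
    rw [eq_div_iff (mul_ne_zero h1 h2), ← hA', ← hB']
    ring
  refine ⟨key, ?_⟩
  rw [key, hR', ← Finset.prod_sdiff (YoungDiagram.cells_subset_iff.2 hμ), mul_comm (∏ c ∈ μ.cells, _)]
end
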